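/- Let n ≥ 2 and let f₁, f₂ ∈ Q₀ⁿ. Assume that for every unit vector θ ∈ ℝⁿ one has ‖P_{θ⊥} f₁‖_{L¹(θ⊥)} ≤ ‖P_{θ⊥} f₂‖_{L¹(θ⊥)}. Then ‖f₁‖_∞^{1/n} · ‖f₁‖₁^{(n−1)/n} ≤ 8·e·√n · ‖f₂‖_∞^{1/n} · ‖f₂‖₁^{(n−1)/n}. -/

import Mathlib

open MeasureTheory

noncomputable section

/-- `ℝⁿ` with its Euclidean structure. -/
abbrev Eucl (n : ℕ) := EuclideanSpace ℝ (Fin n)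

/-- `f : ℝⁿ → [0,∞)` is log-concave:
`f(tx+(1−t)y) ≥ f(x)^t · f(y)^(1−t)` for all `x, y` and `t ∈ (0,1)`. -/
def IsLogConcave {n : ℕ} (f : Eucl n → ℝ) : Prop :=
  ∀ x y : Eucl n, ∀ t : ℝ, 0 < t → t < 1 →
    f x ^ t * f y ^ (1 - t) ≤ f (t • x + (1 - t) • y)

/-- The class `Q₀ⁿ`: nonnegative, log-concave, upper semicontinuous, integrable
functions with positive integral. -/
def MemQ0 {n : ℕ} (f : Eucl n → ℝ) : Prop :=
  (∀ x, 0 ≤ f x) ∧ IsLogConcave f ∧ UpperSemicontinuous f ∧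
    Integrable f ∧ 0 < ∫ x, f x

/-- `‖f‖_∞ = sup f`. -/
def supNorm {n : ℕ} (f : Eucl n → ℝ) : ℝ := ⨆ x, f x

/-- `‖f‖_p = (∫ f^p)^(1/p)`. -/
def lpNorm {n : ℕ} (p : ℝ) (f : Eucl n → ℝ) : ℝ := (∫ x, f x ^ p) ^ (1 / p)

/-- `‖P_H f‖_{L¹(H)} = ∫_H sup_{z ∈ H⊥} f(y+z) dλ_H(y)`, the `L¹(H)`-norm of the
projection of `f` onto the subspace `H` (with the Lebesgue measure on `H` induced
by the Euclidean structure). -/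
def projL1 {n : ℕ} (f : Eucl n → ℝ) (H : Submodule ℝ (Eucl n)) : ℝ :=
  ∫ y : H, ⨆ z : Hᗮ, f ((y : Eucl n) + (z : Eucl n))

/-- `‖S_H f‖_{L¹(H)} = ∫_H f dλ_H`, the integral of the section `f|_H`. -/
def sectL1 {n : ℕ} (f : Eucl n → ℝ) (H : Submodule ℝ (Eucl n)) : ℝ :=
  ∫ y : H, f (y : Eucl n)

/-!
Fix a basis `v₁, …, vₙ`. In the coordinates of this basis, projecting along `vᵢ` forgets the `i`-th
coordinate, so the Loomis–Whitney inequality bounds `∫ f₁ ^ (n / (n - 1))`, and by log-concavity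
`‖f₁‖_∞ * ‖f₁‖₁ ^ (n - 1)`, by the product of the `‖vᵢ‖ * projL1 f₁ vᵢ⊥` divided by
`|det (v₁, …, vₙ)|`. The hypothesis replaces `f₁` by `f₂` in this product. If moreover the `vᵢ` are
differences of points of one superlevel set of `f₂`, then sliding `f₂` along `vᵢ` bounds
`‖vᵢ‖ * projL1 f₂ vᵢ⊥` by a multiple of `∫ f₂`. It remains to choose a superlevel set of large
volume, by the layer-cake formula, and `n` such vectors with a large determinant: for random ones,
Andréief's identity expresses the mean of the squared determinant through the determinant of the
second moment matrix, which a comparison with Gaussian densities bounds below.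
-/

open Set Filter Topology Module
open scoped ENNReal

section MeasureLemmas

theorem exists_measurable_ge_ae_eq {α : Type*} [MeasurableSpace α] {μ : Measure α}
    {f : α → ℝ≥0∞} (hf : AEMeasurable f μ) : ∃ g, Measurable g ∧ f ≤ g ∧ f =ᵐ[μ] g := by
  classical
  obtain ⟨s, hs, hsm, hs0⟩ := exists_measurable_superset_of_null (ae_iff.1 hf.ae_eq_mk)
  refine ⟨s.piecewise (fun _ ↦ ⊤) (hf.mk f), measurable_const.piecewise hsm hf.measurable_mk,
    fun x ↦ ?_, ?_⟩
  · by_cases hx : x ∈ s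
    · simp [hx]
    · rw [piecewise_eq_of_notMem _ _ _ hx]
      exact (not_not.1 fun h ↦ hx (hs h)).le
  · filter_upwards [hf.ae_eq_mk, measure_eq_zero_iff_ae_notMem.1 hs0] with x hfx hx
    rw [piecewise_eq_of_notMem _ _ _ hx, hfx]

theorem aemeasurable_of_nullMeasurableSet_lt {α : Type*} [MeasurableSpace α] {μ : Measure α}
    {f : α → ℝ} (hf : ∀ t, NullMeasurableSet {x | t < f x} μ) : AEMeasurable f μ :=
  NullMeasurable.aemeasurable fun _ hs ↦
    (measurable_of_Ioi (δ := NullMeasurableSpace α μ) hf) hs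

/-- A level-by-level shift: `G` dominates `φ` translated by every `τ ∈ [0, a]`, so a gap of length
`a` opened at `p` can be filled with the value `φ p`. -/
theorem lintegral_add_mul_iSup_le_of_shift_le {φ G : ℝ → ℝ≥0∞} {a : ℝ} (ha : 0 ≤ a)
    (h : ∀ x, ∀ τ ∈ Icc 0 a, φ (x - τ) ≤ G x) :
    (∫⁻ x, φ x) + ENNReal.ofReal a * ⨆ p, φ p ≤ ∫⁻ x, G x := by
  rw [ENNReal.mul_iSup, ENNReal.add_iSup]
  refine iSup_le fun p ↦ ?_
  have hφ : ∫⁻ x, φ x = (∫⁻ x in Iio p, φ x) + ∫⁻ x in Ici (p + a), φ (x - a) := by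
    have hshift : ∫⁻ x in Ici (p + a), φ (x - a) = ∫⁻ x in Ici p, φ x := by
      simp only [← lintegral_indicator measurableSet_Ici]
      rw [← lintegral_sub_right_eq_self ((Ici p).indicator φ) a]
      exact lintegral_congr fun x ↦ by simp only [indicator, mem_Ici, le_sub_iff_add_le]
    rw [hshift, ← lintegral_add_compl φ (measurableSet_Iio (a := p)), compl_Iio]
  have hgap : ENNReal.ofReal a * φ p = ∫⁻ _ in Ico p (p + a), φ p := by simp [mul_comm]
  have hG : ∫⁻ x, G x = (∫⁻ x in Iio p, G x) + (∫⁻ x in Ici (p + a), G x) +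
      ∫⁻ x in Ico p (p + a), G x := by
    rw [add_assoc, ← lintegral_union measurableSet_Ico
        ((Iio_disjoint_Ici le_rfl).mono_left Ico_subset_Iio_self).symm, union_comm,
      Ico_union_Ici_eq_Ici (by linarith), ← compl_Iio, lintegral_add_compl G measurableSet_Iio]
  rw [hφ, hgap, hG]
  gcongr ?_ + ?_ + ?_
  · exact lintegral_mono fun x ↦ by simpa using h x 0 ⟨le_rfl, ha⟩
  · exact lintegral_mono fun x ↦ h x a ⟨ha, le_rfl⟩
  · refine setLIntegral_mono' measurableSet_Ico fun x hx ↦ ?_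
    simpa using h x (x - p) ⟨by linarith [hx.1], by linarith [hx.2]⟩

variable {E : Type*} [NormedAddCommGroup E] [MeasurableSpace E] [BorelSpace E]

section NormedSpace

variable [NormedSpace ℝ E] [FiniteDimensional ℝ E] (μ : Measure E) [μ.IsAddHaarMeasure]

theorem lintegral_comp_smul_add (g : E → ℝ≥0∞) {a : ℝ} (ha : a ≠ 0) (b : E) :
    ∫⁻ x, g (a • x + b) ∂μ = ENNReal.ofReal |(a ^ finrank ℝ E)⁻¹| * ∫⁻ x, g x ∂μ := by
  have hemb : MeasurableEmbedding (a • · : E → E) :=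
    (Homeomorph.smulOfNeZero a ha).measurableEmbedding
  rw [← lintegral_add_right_eq_self g b, ← hemb.lintegral_map (fun x ↦ g (x + b)),
    Measure.map_addHaar_smul μ ha, lintegral_smul_measure, smul_eq_mul]

theorem aemeasurable_of_quasiconcaveOn_univ {f : E → ℝ} (hf : QuasiconcaveOn ℝ univ f) :
    AEMeasurable f μ :=
  aemeasurable_of_nullMeasurableSet_lt fun t ↦ by
    simpa using (hf.convex_gt t).nullMeasurableSet μ

end NormedSpace

section InnerProductSpace

variable [InnerProductSpace ℝ E] [FiniteDimensional ℝ E]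

open scoped RealInnerProductSpace

theorem measurePreserving_orthogonal_add_smul {θ : E} (hθ : ‖θ‖ = 1) :
    MeasurePreserving (fun p : (ℝ ∙ θ)ᗮ × ℝ ↦ (p.1 : E) + p.2 • θ) := by
  have hpair : MeasurePreserving
      (Prod.map (LinearIsometryEquiv.toSpanUnitSingleton (𝕜 := ℝ) θ hθ) (id : (ℝ ∙ θ)ᗮ → (ℝ ∙ θ)ᗮ))
      (volume.prod volume) (volume.prod volume) :=
    (LinearIsometryEquiv.measurePreserving _).prod (MeasurePreserving.id volume)
  have hdecomp : MeasurePreserving (ℝ ∙ θ).orthogonalDecomposition.symm :=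
    LinearIsometryEquiv.measurePreserving _
  convert (hdecomp.comp (WithLp.volume_preserving_toLp _ _)).comp
    (hpair.comp Measure.measurePreserving_swap) using 1
  · ext p
    simp [Submodule.orthogonalDecomposition_symm_apply, add_comm]
  · rfl

theorem lintegral_eq_mul_lintegral_orthogonal {v : E} (hv : v ≠ 0) {Φ : E → ℝ≥0∞}
    (hΦ : AEMeasurable Φ) :
    ∫⁻ x, Φ x = ENNReal.ofReal ‖v‖ * ∫⁻ y : (ℝ ∙ v)ᗮ, ∫⁻ s : ℝ, Φ (y + s • v) := by
  have hv' : ‖v‖⁻¹ ≠ 0 := inv_ne_zero (norm_ne_zero_iff.2 hv)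
  have hspan : (ℝ ∙ ‖v‖⁻¹ • v) = ℝ ∙ v := Submodule.span_singleton_smul_eq hv'.isUnit v
  have hmp : MeasurePreserving fun p : (ℝ ∙ v)ᗮ × ℝ ↦ (p.1 : E) + p.2 • ‖v‖⁻¹ • v := by
    rw [← hspan]
    exact measurePreserving_orthogonal_add_smul (norm_smul_inv_norm (𝕜 := ℝ) hv)
  have hscale (g : ℝ → ℝ≥0∞) : ∫⁻ s, g (s * ‖v‖⁻¹) = ENNReal.ofReal ‖v‖ * ∫⁻ s, g s := by
    simpa [mul_comm] using lintegral_comp_smul_add volume g hv' 0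
  calc ∫⁻ x, Φ x = ∫⁻ p : (ℝ ∙ v)ᗮ × ℝ, Φ (p.1 + p.2 • ‖v‖⁻¹ • v) := by
        rw [← lintegral_map' (hmp.map_eq.symm ▸ hΦ) hmp.aemeasurable, hmp.map_eq]
    _ = ∫⁻ y : (ℝ ∙ v)ᗮ, ∫⁻ s : ℝ, Φ (y + (s * ‖v‖⁻¹) • v) := by
        simp only [← smul_smul]
        exact lintegral_prod _ (hΦ.comp_quasiMeasurePreserving hmp.quasiMeasurePreserving)
    _ = ENNReal.ofReal ‖v‖ * ∫⁻ y : (ℝ ∙ v)ᗮ, ∫⁻ s : ℝ, Φ (y + s • v) := by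
        rw [← lintegral_const_mul' _ _ ENNReal.ofReal_ne_top]
        exact lintegral_congr fun y ↦ hscale fun s ↦ Φ (y + s • v)

end InnerProductSpace

end MeasureLemmas

theorem le_mul_of_forall_add_mul_le_mul_exp {a b κ : ℝ}
    (h : ∀ s > 0, a + s * b ≤ a * Real.exp (s * κ)) : b ≤ a * κ := by
  have hderiv : HasDerivAt (fun s ↦ a * Real.exp (s * κ)) (a * κ) 0 := by
    simpa using (((hasDerivAt_id (0 : ℝ)).mul_const κ).exp).const_mul a
  refine ge_of_tendsto hderiv.tendsto_slope_zero_right ?_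
  filter_upwards [self_mem_nhdsWithin] with s (hs : 0 < s)
  rw [smul_eq_mul, inv_mul_eq_div, le_div_iff₀ hs]
  simp only [zero_add, zero_mul, Real.exp_zero, mul_one]
  linarith [h s hs]

section LogConcaveDensity

variable {n : ℕ} {f : Eucl n → ℝ}

theorem IsLogConcave.quasiconcaveOn (h0 : ∀ x, 0 ≤ f x) (hf : IsLogConcave f) :
    QuasiconcaveOn ℝ univ f := by
  refine quasiconcaveOn_iff_min_le.2 ⟨convex_univ, fun x _ y _ a b ha hb hab ↦ ?_⟩
  obtain rfl : b = 1 - a := by linarith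
  rcases ha.eq_or_lt with rfl | ha
  · simp
  rcases hb.eq_or_lt with hb | hb
  · obtain rfl : a = 1 := by linarith
    simp
  refine le_trans ?_ (hf x y a ha (by linarith))
  have hm : 0 ≤ min (f x) (f y) := le_min (h0 x) (h0 y)
  calc min (f x) (f y) = min (f x) (f y) ^ a * min (f x) (f y) ^ (1 - a) := by
        rw [← Real.rpow_add' hm (by norm_num), add_sub_cancel, Real.rpow_one]
    _ ≤ f x ^ a * f y ^ (1 - a) := by
        have := Real.rpow_nonneg (h0 x) a
        gcongr
        exacts [min_le_left _ _, min_le_right _ _]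

/-- Integrable log-concave functions with positive integral: the class `Q₀ⁿ` up to modification on
null sets, and the class for which all the estimates are stated. -/
structure IsLogConcaveDensity (f : Eucl n → ℝ) : Prop where
  nonneg : ∀ x, 0 ≤ f x
  isLogConcave : IsLogConcave f
  integrable : Integrable f
  integral_pos : 0 < ∫ x, f x

theorem MemQ0.isLogConcaveDensity (hf : MemQ0 f) : IsLogConcaveDensity f where
  nonneg := hf.1
  isLogConcave := hf.2.1
  integrable := hf.2.2.2.1
  integral_pos := hf.2.2.2.2

namespace IsLogConcaveDensity

theorem quasiconcaveOn (hf : IsLogConcaveDensity f) : QuasiconcaveOn ℝ univ f :=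
  hf.isLogConcave.quasiconcaveOn hf.nonneg

theorem le_apply_combo (hf : IsLogConcaveDensity f) {m a b : ℝ} {x y : Eucl n} (hx : m ≤ f x)
    (hy : m ≤ f y) (ha : 0 ≤ a) (hb : 0 ≤ b) (hab : a + b = 1) : m ≤ f (a • x + b • y) :=
  (hf.quasiconcaveOn m ⟨mem_univ x, hx⟩ ⟨mem_univ y, hy⟩ ha hb hab).2

theorem aemeasurable_ofReal (hf : IsLogConcaveDensity f) :
    AEMeasurable fun x ↦ ENNReal.ofReal (f x) :=
  hf.integrable.aemeasurable.ennreal_ofReal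

theorem lintegral_ofReal (hf : IsLogConcaveDensity f) :
    ∫⁻ x, ENNReal.ofReal (f x) = ENNReal.ofReal (∫ x, f x) :=
  (ofReal_integral_eq_lintegral_ofReal hf.integrable (.of_forall hf.nonneg)).symm

theorem measure_pos_ne_zero (hf : IsLogConcaveDensity f) : volume {x | 0 < f x} ≠ 0 := by
  intro h
  refine hf.integral_pos.ne' (integral_eq_zero_of_ae ?_)
  filter_upwards [measure_eq_zero_iff_ae_notMem.1 h] with x hx
  exact (not_lt.1 hx).antisymm (hf.nonneg x)

/-- Log-concavity at the midpoint bounds `√f(x) · ∫ √f` by a multiple of `∫ f`. -/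
theorem bddAbove_range (hf : IsLogConcaveDensity f) : BddAbove (range f) := by
  set J := ∫⁻ x, ENNReal.ofReal (√(f x))
  set A := ENNReal.ofReal |((1 / 2 : ℝ) ^ finrank ℝ (Eucl n))⁻¹| * ∫⁻ x, ENNReal.ofReal (f x)
  have hA : A ≠ ⊤ := by
    simp only [A, hf.lintegral_ofReal]
    exact ENNReal.mul_ne_top ENNReal.ofReal_ne_top ENNReal.ofReal_ne_top
  have hJ : J ≠ 0 := fun h ↦ by
    rw [lintegral_eq_zero_iff' hf.integrable.aemeasurable.sqrt.ennreal_ofReal] at h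
    refine hf.measure_pos_ne_zero (measure_eq_zero_iff_ae_notMem.2 ?_)
    filter_upwards [h] with x hx
    rw [not_lt, ← Real.sqrt_eq_zero']
    exact (ENNReal.ofReal_eq_zero.1 hx).antisymm (Real.sqrt_nonneg _)
  have hmid (x : Eucl n) : ENNReal.ofReal (√(f x)) * J ≤ A := by
    simp only [A]
    rw [← lintegral_comp_smul_add volume _ (by norm_num) ((1 / 2 : ℝ) • x),
      ← lintegral_const_mul' _ _ ENNReal.ofReal_ne_top]
    refine lintegral_mono fun y ↦ ?_
    rw [← ENNReal.ofReal_mul (Real.sqrt_nonneg _), Real.sqrt_eq_rpow, Real.sqrt_eq_rpow, add_comm]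
    have h := hf.isLogConcave x y (1 / 2) (by norm_num) (by norm_num)
    rw [show (1 - 1 / 2 : ℝ) = 1 / 2 by norm_num] at h
    exact ENNReal.ofReal_le_ofReal h
  refine ⟨(A / J).toReal ^ 2, ?_⟩
  rintro _ ⟨x, rfl⟩
  have hsqrt : √(f x) ≤ (A / J).toReal :=
    (ENNReal.ofReal_le_iff_le_toReal (ENNReal.div_ne_top hA hJ)).1
      ((ENNReal.le_div_iff_mul_le (.inl hJ) (.inr hA)).2 (hmid x))
  exact (Real.sqrt_le_left ENNReal.toReal_nonneg).1 hsqrt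

theorem le_supNorm (hf : IsLogConcaveDensity f) (x : Eucl n) : f x ≤ supNorm f :=
  le_ciSup hf.bddAbove_range x

theorem supNorm_pos (hf : IsLogConcaveDensity f) : 0 < supNorm f := by
  obtain ⟨x, hx : 0 < f x⟩ := nonempty_of_measure_ne_zero hf.measure_pos_ne_zero
  exact hx.trans_le (hf.le_supNorm x)

theorem exists_eventually_pos (hf : IsLogConcaveDensity f) : ∃ y, ∀ᶠ x in 𝓝 y, 0 < f x := by
  by_contra hempty
  have hconv : Convex ℝ {x | 0 < f x} := by simpa using hf.quasiconcaveOn.convex_gt 0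
  refine hf.measure_pos_ne_zero (measure_mono_null ?_ (hconv.addHaar_frontier volume))
  have hint : interior {x | 0 < f x} = ∅ := eq_empty_of_forall_notMem fun y hy ↦
    hempty ⟨y, mem_interior_iff_mem_nhds.1 hy⟩
  rw [frontier, hint, sdiff_empty]
  exact subset_closure

/-- Both points `y₀`, `y₀ + v` having value at least `m`, the whole segment does, and the right-hand
argument is a convex combination of `y - τ • v` with a point of this segment. -/
theorem apply_sub_smul_le (hf : IsLogConcaveDensity f) {y₀ v : Eucl n} {m s τ : ℝ} (hm : 0 < m)
    (hy₀ : m ≤ f y₀) (hv : m ≤ f (y₀ + v)) (hs : 0 < s) (hτ : τ ∈ Icc 0 s) (y : Eucl n) :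
    f (y - τ • v) ≤ (supNorm f / m) ^ (s / (1 + s)) *
      f ((1 + s)⁻¹ • y + (s / (1 + s)) • y₀) := by
  set a := f (y - τ • v)
  have hM := hf.supNorm_pos
  rcases (hf.nonneg _ : 0 ≤ a).eq_or_lt with ha | ha
  · refine ha.symm.le.trans ?_
    exact mul_nonneg (by positivity) (hf.nonneg _)
  set u := (τ / s) • (y₀ + v) + ((s - τ) / s) • y₀
  have hmu : m ≤ f u := hf.le_apply_combo hv hy₀ (div_nonneg hτ.1 hs.le)
    (div_nonneg (sub_nonneg.2 hτ.2) hs.le) (by field_simp; ring)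
  set q := s / (1 + s)
  have : 0 < q := by positivity
  have hq' : (1 + s)⁻¹ = 1 - q := by simp only [q]; field_simp; ring
  have hcombo : (1 + s)⁻¹ • (y - τ • v) + q • u = (1 + s)⁻¹ • y + q • y₀ := by
    simp only [u, q]
    match_scalars <;> field_simp <;> ring
  have hlc := hf.isLogConcave (y - τ • v) u (1 + s)⁻¹ (by positivity)
    (inv_lt_one_of_one_lt₀ (by linarith))
  rw [show 1 - (1 + s)⁻¹ = q by linarith, hcombo, hq'] at hlc
  calc a = (a / m) ^ q * (a ^ (1 - q) * m ^ q) := by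
        change 0 < a at ha
        rw [Real.div_rpow ha.le hm.le, Real.rpow_sub ha, Real.rpow_one]
        field_simp
    _ ≤ (supNorm f / m) ^ q * (a ^ (1 - q) * f u ^ q) := by
        gcongr
        exact hf.le_supNorm _
    _ ≤ _ := by
        rw [hq']
        gcongr

end IsLogConcaveDensity

/-- The projection `P_H f` of `f` onto the subspace `H`: `projL1 f H` is its integral over `H`. -/
def projFun (f : Eucl n → ℝ) (H : Submodule ℝ (Eucl n)) (y : H) : ℝ :=
  ⨆ z : Hᗮ, f ((y : Eucl n) + (z : Eucl n))

namespace IsLogConcaveDensity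

theorem le_projFun (hf : IsLogConcaveDensity f) (H : Submodule ℝ (Eucl n)) (y : H) (z : Hᗮ) :
    f (y + z) ≤ projFun f H y :=
  le_ciSup (f := fun z : Hᗮ ↦ f (y + z)) (hf.bddAbove_range.mono (range_comp_subset_range _ _)) z

theorem projFun_nonneg (hf : IsLogConcaveDensity f) (H : Submodule ℝ (Eucl n)) (y : H) :
    0 ≤ projFun f H y :=
  Real.iSup_nonneg fun _ ↦ hf.nonneg _

theorem projL1_nonneg (hf : IsLogConcaveDensity f) (H : Submodule ℝ (Eucl n)) : 0 ≤ projL1 f H :=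
  integral_nonneg (hf.projFun_nonneg H)

theorem quasiconcaveOn_projFun (hf : IsLogConcaveDensity f) (H : Submodule ℝ (Eucl n)) :
    QuasiconcaveOn ℝ univ (projFun f H) := by
  refine quasiconcaveOn_iff_min_le.2 ⟨convex_univ, fun x _ y _ a b ha hb hab ↦ ?_⟩
  refine le_of_forall_lt fun t ht ↦ ?_
  obtain ⟨z, hz⟩ := exists_lt_of_lt_ciSup (ht.trans_le (min_le_left _ _))
  obtain ⟨w, hw⟩ := exists_lt_of_lt_ciSup (ht.trans_le (min_le_right _ _))
  calc t < min (f (x + z)) (f (y + w)) := lt_min hz hw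
    _ ≤ f (a • (x + z) + b • (y + w)) :=
        hf.le_apply_combo (min_le_left _ _) (min_le_right _ _) ha hb hab
    _ = f ((a • x + b • y : H) + (a • z + b • w : Hᗮ)) := by
        simp only [Submodule.coe_add, Submodule.coe_smul]
        congr 1
        module
    _ ≤ projFun f H (a • x + b • y) := hf.le_projFun H _ _

theorem aemeasurable_projFun (hf : IsLogConcaveDensity f) (H : Submodule ℝ (Eucl n)) :
    AEMeasurable (projFun f H) :=
  aemeasurable_of_quasiconcaveOn_univ volume (hf.quasiconcaveOn_projFun H)

theorem projL1_eq_toReal_lintegral (hf : IsLogConcaveDensity f) (H : Submodule ℝ (Eucl n)) :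
    projL1 f H = (∫⁻ y, ENNReal.ofReal (projFun f H y)).toReal :=
  integral_eq_lintegral_of_nonneg_ae (.of_forall (hf.projFun_nonneg H))
    (hf.aemeasurable_projFun H).aestronglyMeasurable

theorem ofReal_projFun_orthogonal_span (hf : IsLogConcaveDensity f) (v : Eucl n)
    (y : (ℝ ∙ v)ᗮ) :
    ENNReal.ofReal (projFun f (ℝ ∙ v)ᗮ y) = ⨆ t : ℝ, ENNReal.ofReal (f (y + t • v)) := by
  have hspan : (ℝ ∙ v)ᗮᗮ = ℝ ∙ v := Submodule.orthogonal_orthogonal _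
  refine le_antisymm ?_ (iSup_le fun t ↦ ?_)
  · have hbdd : BddAbove (range fun z : (ℝ ∙ v)ᗮᗮ ↦ f (y + z)) :=
      hf.bddAbove_range.mono (range_comp_subset_range _ _)
    rw [projFun, ENNReal.ofReal_mono.map_ciSup_of_continuousAt
      ENNReal.continuous_ofReal.continuousAt hbdd]
    refine iSup_le fun z ↦ ?_
    obtain ⟨t, ht⟩ := Submodule.mem_span_singleton.1 (hspan.le z.2)
    rw [← ht]
    exact le_iSup (fun t : ℝ ↦ ENNReal.ofReal (f (y + t • v))) t
  · have htv : t • v ∈ (ℝ ∙ v)ᗮᗮ := hspan.ge (Submodule.mem_span_singleton.2 ⟨t, rfl⟩)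
    exact ENNReal.ofReal_le_ofReal (hf.le_projFun _ y ⟨t • v, htv⟩)

theorem lintegral_smul_apply_smul_add (hf : IsLogConcaveDensity f) {c s : ℝ} (hc : 0 ≤ c)
    (hs : 0 < s) (b : Eucl n) :
    ∫⁻ x, ENNReal.ofReal (c * f (s⁻¹ • x + b)) = ENNReal.ofReal (c * s ^ n * ∫ x, f x) := by
  rw [lintegral_comp_smul_add volume (fun x ↦ ENNReal.ofReal (c * f x)) (inv_ne_zero hs.ne')]
  simp only [ENNReal.ofReal_mul hc]
  rw [lintegral_const_mul' _ _ ENNReal.ofReal_ne_top, hf.lintegral_ofReal,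
    ← ENNReal.ofReal_mul hc, ← ENNReal.ofReal_mul (abs_nonneg _)]
  simp only [finrank_euclideanSpace, Fintype.card_fin, inv_pow, inv_inv, abs_of_pos (pow_pos hs n)]
  congr 1
  ring

theorem ofReal_integral_add_mul_lintegral_projFun_le (hf : IsLogConcaveDensity f)
    {y₀ v : Eucl n} {m s : ℝ} (hv : v ≠ 0) (hm : 0 < m) (hy₀ : m ≤ f y₀) (hyv : m ≤ f (y₀ + v))
    (hs : 0 < s) :
    ENNReal.ofReal (∫ x, f x) +
        ENNReal.ofReal (s * ‖v‖) * ∫⁻ y, ENNReal.ofReal (projFun f (ℝ ∙ v)ᗮ y) ≤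
      ENNReal.ofReal ((supNorm f / m) ^ (s / (1 + s)) * (1 + s) ^ n * ∫ x, f x) := by
  have hM := hf.supNorm_pos
  set C := (supNorm f / m) ^ (s / (1 + s))
  set b := (s / (1 + s)) • y₀
  set F : Eucl n → ℝ≥0∞ := fun x ↦ ENNReal.ofReal (f x)
  set G : Eucl n → ℝ≥0∞ := fun x ↦ ENNReal.ofReal (C * f ((1 + s)⁻¹ • x + b))
  have hG : AEMeasurable G := by
    have := ((hf.integrable.comp_add_right b).comp_smul (R := (1 + s)⁻¹) (by positivity))
    exact (this.const_mul C).aemeasurable.ennreal_ofReal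
  calc _ = ENNReal.ofReal ‖v‖ * ∫⁻ y : (ℝ ∙ v)ᗮ, ((∫⁻ t : ℝ, F (y + t • v)) +
          ENNReal.ofReal s * ⨆ t : ℝ, F (y + t • v)) := by
        simp only [F, ← hf.ofReal_projFun_orthogonal_span]
        rw [lintegral_add_right' _ ((hf.aemeasurable_projFun _).ennreal_ofReal.const_mul _),
          lintegral_const_mul' _ _ ENNReal.ofReal_ne_top, mul_add, ← mul_assoc,
          ← ENNReal.ofReal_mul (norm_nonneg v), mul_comm ‖v‖ s, ← hf.lintegral_ofReal,
          ← lintegral_eq_mul_lintegral_orthogonal hv hf.aemeasurable_ofReal]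
    _ ≤ ENNReal.ofReal ‖v‖ * ∫⁻ y : (ℝ ∙ v)ᗮ, ∫⁻ t : ℝ, G (y + t • v) := by
        gcongr with y
        refine lintegral_add_mul_iSup_le_of_shift_le hs.le fun t τ hτ ↦ ?_
        rw [sub_smul, ← add_sub_assoc]
        exact ENNReal.ofReal_le_ofReal (hf.apply_sub_smul_le hm hy₀ hyv hs hτ _)
    _ = ∫⁻ x, G x := (lintegral_eq_mul_lintegral_orthogonal hv hG).symm
    _ = _ := hf.lintegral_smul_apply_smul_add (by positivity) (by positivity) b

theorem lintegral_projFun_ne_top (hf : IsLogConcaveDensity f) {v : Eucl n} (hv : v ≠ 0) :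
    ∫⁻ y, ENNReal.ofReal (projFun f (ℝ ∙ v)ᗮ y) ≠ ⊤ := by
  obtain ⟨y₀, hy₀⟩ := hf.exists_eventually_pos
  obtain ⟨ε, hpos, hε⟩ : ∃ ε : ℝ, 0 < f (y₀ + ε • v) ∧ 0 < ε := by
    have htendsto : Tendsto (fun ε : ℝ ↦ y₀ + ε • v) (𝓝[>] 0) (𝓝 y₀) :=
      Continuous.tendsto' (by fun_prop) 0 y₀ (by simp) |>.mono_left nhdsWithin_le_nhds
    exact ((htendsto.eventually hy₀).and self_mem_nhdsWithin).exists
  intro htop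
  have h := hf.ofReal_integral_add_mul_lintegral_projFun_le (smul_ne_zero hε.ne' hv)
    (lt_min hy₀.self_of_nhds hpos) (min_le_left _ _) (min_le_right _ _) one_pos
  have hspan : (ℝ ∙ ε • v) = ℝ ∙ v := Submodule.span_singleton_smul_eq hε.ne'.isUnit v
  rw [hspan, htop, ENNReal.mul_top (by simpa using ⟨hε.ne', hv⟩)] at h
  simp at h

theorem ofReal_projL1 (hf : IsLogConcaveDensity f) {v : Eucl n} (hv : v ≠ 0) :
    ENNReal.ofReal (projL1 f (ℝ ∙ v)ᗮ) = ∫⁻ y, ENNReal.ofReal (projFun f (ℝ ∙ v)ᗮ y) := by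
  rw [hf.projL1_eq_toReal_lintegral, ENNReal.ofReal_toReal (hf.lintegral_projFun_ne_top hv)]

/-- A Rogers–Shephard type upper bound, the derivative at `s = 0` of
`ofReal_integral_add_mul_lintegral_projFun_le`. -/
theorem norm_mul_projL1_le (hf : IsLogConcaveDensity f) {y₀ v : Eucl n} {m : ℝ} (hv : v ≠ 0)
    (hm : 0 < m) (hy₀ : m ≤ f y₀) (hyv : m ≤ f (y₀ + v)) :
    ‖v‖ * projL1 f (ℝ ∙ v)ᗮ ≤ (∫ x, f x) * (n + Real.log (supNorm f / m)) := by
  have hproj : 0 ≤ projL1 f (ℝ ∙ v)ᗮ := hf.projL1_nonneg _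
  have hI := hf.integral_pos
  refine le_mul_of_forall_add_mul_le_mul_exp fun s hs ↦ ?_
  have hMm : 1 ≤ supNorm f / m := (one_le_div hm).2 (hy₀.trans (hf.le_supNorm y₀))
  have h := hf.ofReal_integral_add_mul_lintegral_projFun_le hv hm hy₀ hyv hs
  rw [← hf.ofReal_projL1 hv, ← ENNReal.ofReal_mul (by positivity),
    ← ENNReal.ofReal_add hI.le (by positivity), ENNReal.ofReal_le_ofReal_iff (by positivity)] at h
  calc (∫ x, f x) + s * (‖v‖ * projL1 f (ℝ ∙ v)ᗮ)
      ≤ (supNorm f / m) ^ (s / (1 + s)) * (1 + s) ^ n * ∫ x, f x := by linarith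
    _ ≤ (supNorm f / m) ^ s * Real.exp s ^ n * ∫ x, f x := by
        gcongr
        · exact div_le_self hs.le (by linarith)
        · linarith [Real.add_one_le_exp s]
    _ = (∫ x, f x) * Real.exp (s * (n + Real.log (supNorm f / m))) := by
        rw [Real.rpow_def_of_pos (by positivity), ← Real.exp_nat_mul, ← Real.exp_add, mul_comm]
        ring_nf

theorem exists_measurable_fiber_majorant (hf : IsLogConcaveDensity f) {v : Eucl n} (hv : v ≠ 0) :
    ∃ P : (ℝ ∙ v)ᗮ → ℝ≥0∞, Measurable P ∧
      (∀ (y : (ℝ ∙ v)ᗮ) (t : ℝ), ENNReal.ofReal (f (y + t • v)) ≤ P y) ∧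
      ∫⁻ y, P y = ENNReal.ofReal (projL1 f (ℝ ∙ v)ᗮ) := by
  obtain ⟨P, hP, hle, hae⟩ :=
    exists_measurable_ge_ae_eq (hf.aemeasurable_projFun (ℝ ∙ v)ᗮ).ennreal_ofReal
  refine ⟨P, hP, fun y t ↦ ?_, by rw [hf.ofReal_projL1 hv, lintegral_congr_ae hae]⟩
  exact (le_iSup (fun t : ℝ ↦ ENNReal.ofReal (f (y + t • v))) t).trans
    ((hf.ofReal_projFun_orthogonal_span v y).ge.trans (hle y))

end IsLogConcaveDensity

end LogConcaveDensity

section LoomisWhitney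

variable {α : Type*} [MeasurableSpace α]

theorem measurable_insertNth {k : ℕ} (i : Fin (k + 1)) :
    Measurable fun p : α × (Fin k → α) ↦ (i.insertNth p.1 p.2 : Fin (k + 1) → α) :=
  (MeasurableEquiv.piFinSuccAbove (fun _ ↦ α) i).symm.measurable

theorem measurable_removeNth {k : ℕ} (i : Fin (k + 1)) :
    Measurable fun c : Fin (k + 1) → α ↦ (i.removeNth c : Fin k → α) :=
  measurable_pi_lambda _ fun _ ↦ measurable_pi_apply _

variable (μ : Measure α) [SigmaFinite μ]

theorem lintegral_pi_eq_lintegral_insertNth {k : ℕ} (i : Fin (k + 1))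
    {Φ : (Fin (k + 1) → α) → ℝ≥0∞} (hΦ : Measurable Φ) :
    ∫⁻ c, Φ c ∂Measure.pi (fun _ ↦ μ) =
      ∫⁻ x, ∫⁻ t, Φ (i.insertNth t x) ∂μ ∂Measure.pi (fun _ ↦ μ) := by
  rw [← ((measurePreserving_piFinSuccAbove (fun _ ↦ μ) i).symm).lintegral_comp hΦ]
  exact lintegral_prod_symm _ (hΦ.comp (measurable_insertNth i)).aemeasurable

/-- Integrate first along the coordinate `0`, on which the factor `Q 0` does not depend, and apply
Hölder's inequality to the remaining factors. -/
theorem lintegral_prod_removeNth_le_lintegral_mul {m : ℕ}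
    {Q : Fin (m + 2) → (Fin (m + 1) → α) → ℝ≥0∞} (hQ : ∀ i, Measurable (Q i)) :
    ∫⁻ c, ∏ i, Q i (i.removeNth c) ^ ((m : ℝ) + 1)⁻¹ ∂Measure.pi (fun _ ↦ μ) ≤
      ∫⁻ x, Q 0 x ^ ((m : ℝ) + 1)⁻¹ * ∏ i : Fin (m + 1),
        (∫⁻ t, Q i.succ ((0 : Fin (m + 1)).insertNth t (i.removeNth x)) ∂μ) ^ ((m : ℝ) + 1)⁻¹
          ∂Measure.pi (fun _ ↦ μ) := by
  have hprod : Measurable fun c : Fin (m + 2) → α ↦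
      ∏ i, Q i (i.removeNth c) ^ ((m : ℝ) + 1)⁻¹ :=
    Finset.measurable_prod _ fun i _ ↦ ((hQ i).comp (measurable_removeNth i)).pow_const _
  rw [lintegral_pi_eq_lintegral_insertNth μ 0 hprod]
  refine lintegral_mono fun x ↦ ?_
  have hsection (i : Fin (m + 1)) :
      Measurable fun t ↦ Q i.succ ((0 : Fin (m + 1)).insertNth t (i.removeNth x)) :=
    (hQ _).comp ((measurable_insertNth 0).comp (measurable_id.prodMk measurable_const))
  have hremove (i : Fin (m + 1)) (t : α) :
      i.succ.removeNth ((0 : Fin (m + 2)).insertNth t x : Fin (m + 2) → α) =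
        (0 : Fin (m + 1)).insertNth t (i.removeNth x) := by
    simp only [Fin.insertNth_zero']
    exact Fin.cons_comp_succ_succAbove t x i
  simp only [Fin.prod_univ_succ (n := m + 1), Fin.removeNth_insertNth, hremove]
  rw [lintegral_const_mul _ (Finset.measurable_prod _ fun i _ ↦ (hsection i).pow_const _)]
  gcongr
  refine ENNReal.lintegral_prod_norm_pow_le _ (fun i _ ↦ (hsection i).aemeasurable) ?_
    fun _ _ ↦ by positivity
  simp only [Finset.sum_const, Finset.card_univ, Fintype.card_fin, nsmul_eq_mul]
  push_cast
  exact mul_inv_cancel₀ (by positivity)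

theorem loomis_whitney {k : ℕ} (hk : k ≠ 0) {Q : Fin (k + 1) → (Fin k → α) → ℝ≥0∞}
    (hQ : ∀ i, Measurable (Q i)) :
    ∫⁻ c, ∏ i, Q i (i.removeNth c) ^ (k : ℝ)⁻¹ ∂Measure.pi (fun _ ↦ μ) ≤
      ∏ i, (∫⁻ z, Q i z ∂Measure.pi (fun _ ↦ μ)) ^ (k : ℝ)⁻¹ := by
  induction k with
  | zero => exact absurd rfl hk
  | succ m ih =>
  push_cast
  refine (lintegral_prod_removeNth_le_lintegral_mul μ hQ).trans ?_
  set R : Fin (m + 1) → (Fin m → α) → ℝ≥0∞ := fun i w ↦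
    ∫⁻ t, Q i.succ ((0 : Fin (m + 1)).insertNth t w) ∂μ
  have hR (i : Fin (m + 1)) : Measurable (R i) :=
    ((hQ i.succ).comp ((measurable_insertNth 0).comp measurable_swap)).lintegral_prod_right'
  have hRQ (i : Fin (m + 1)) :
      ∫⁻ w, R i w ∂Measure.pi (fun _ ↦ μ) = ∫⁻ z, Q i.succ z ∂Measure.pi (fun _ ↦ μ) :=
    (lintegral_pi_eq_lintegral_insertNth μ 0 (hQ _)).symm
  rw [Fin.prod_univ_succ]
  simp only [← hRQ]
  rcases eq_or_ne m 0 with rfl | hm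
  · have hconst (x : Fin 1 → α) :
        R 0 ((0 : Fin 1).removeNth x) = ∫⁻ w, R 0 w ∂Measure.pi (fun _ ↦ μ) := by
      rw [Measure.pi_of_empty _ ((0 : Fin 1).removeNth x), lintegral_dirac]
    simp only [Fin.prod_univ_succ, Fin.prod_univ_zero, mul_one, Nat.cast_zero, zero_add, inv_one,
      ENNReal.rpow_one]
    exact ((lintegral_congr fun x ↦ congrArg (Q 0 x * ·) (hconst x)).trans
      (lintegral_mul_const _ (hQ 0))).le
  · set G : (Fin (m + 1) → α) → ℝ≥0∞ := fun x ↦ ∏ i, R i (i.removeNth x) ^ (m : ℝ)⁻¹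
    have hG : Measurable G := Finset.measurable_prod _ fun i _ ↦
      ((hR i).comp (measurable_removeNth i)).pow_const _
    have hexp : 0 ≤ (m : ℝ) / (m + 1) := by positivity
    have hpow (a : Fin (m + 1) → ℝ≥0∞) :
        ∏ i, a i ^ ((m : ℝ) + 1)⁻¹ = (∏ i, a i ^ (m : ℝ)⁻¹) ^ ((m : ℝ) / (m + 1)) := by
      rw [← ENNReal.prod_rpow_of_nonneg hexp]
      simp only [← ENNReal.rpow_mul]
      rw [inv_mul_eq_div, div_div_cancel_left' (by exact_mod_cast hm)]
    simp only [hpow]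
    refine (ENNReal.lintegral_mul_norm_pow_le (hQ 0).aemeasurable hG.aemeasurable (by positivity)
      hexp (by field_simp; ring)).trans ?_
    gcongr
    exact ih hm hR

end LoomisWhitney

section ObliqueCoordinates

theorem equivFun_symm_insertNth {R M : Type*} [Semiring R] [AddCommMonoid M] [Module R M] {k : ℕ}
    (b : Basis (Fin (k + 1)) R M) (i : Fin (k + 1)) (t : R) (z : Fin k → R) :
    b.equivFun.symm (i.insertNth t z) = b.equivFun.symm (i.insertNth 0 z) + t • b i := by
  simp [Basis.equivFun_symm_apply, Fin.sum_univ_succAbove _ i, add_comm]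

variable {E : Type*} [NormedAddCommGroup E] [InnerProductSpace ℝ E] [FiniteDimensional ℝ E]
  [MeasurableSpace E] [BorelSpace E]

theorem lintegral_eq_mul_lintegral_equivFun_symm {ι : Type*} [Fintype ι] [DecidableEq ι]
    (e : OrthonormalBasis ι ℝ E) (b : Basis ι ℝ E) (Φ : E → ℝ≥0∞) :
    ∫⁻ x, Φ x = ENNReal.ofReal |e.toBasis.det b| * ∫⁻ c, Φ (b.equivFun.symm c) := by
  let T : (ι → ℝ) ≃L[ℝ] E := b.equivFun.symm.toContinuousLinearEquiv
  have hT : (volume : Measure (ι → ℝ)).map T = b.addHaar := by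
    rw [← addHaarMeasure_eq_volume_pi, ← Basis.parallelepiped_basisFun, ← Basis.addHaar_def,
      Basis.map_addHaar]
    congr 1
    ext i
    simp [T]
  have hvol : volume = ENNReal.ofReal |e.toBasis.det b| • b.addHaar := by
    rw [← Measure.addHaar_parallelepiped, e.addHaar_eq_volume, Basis.addHaar_def]
    simpa using Measure.addHaarMeasure_unique volume b.parallelepiped
  rw [hvol, lintegral_smul_measure, ← hT]
  exact congrArg _ (T.toHomeomorph.measurableEmbedding.lintegral_map Φ)

/-- Both sides compute the integral of `P ∘ (projection along b i)` over the strip of all points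
whose `i`-th coordinate lies in `[0, 1)`. -/
theorem lintegral_orthogonalProjectionOnto_insertNth {k : ℕ}
    (e : OrthonormalBasis (Fin (k + 1)) ℝ E) (b : Basis (Fin (k + 1)) ℝ E) (i : Fin (k + 1))
    {P : (ℝ ∙ b i)ᗮ → ℝ≥0∞} (hP : Measurable P) :
    ENNReal.ofReal |e.toBasis.det b| *
        ∫⁻ z, P ((ℝ ∙ b i)ᗮ.orthogonalProjectionOnto (b.equivFun.symm (i.insertNth 0 z))) =
      ENNReal.ofReal ‖b i‖ * ∫⁻ y, P y := by
  set Φ : E → ℝ≥0∞ := fun x ↦ P ((ℝ ∙ b i)ᗮ.orthogonalProjectionOnto x)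
  set W : E → ℝ≥0∞ := fun x ↦ (Ico (0 : ℝ) 1).indicator (fun _ ↦ Φ x) (b.coord i x)
  have hstrip (a : ℝ) (C : ℝ≥0∞) :
      ∫⁻ s : ℝ, (Ico (0 : ℝ) 1).indicator (fun _ ↦ C) (a + s) = C := by
    rw [lintegral_add_left_eq_self fun s ↦ (Ico (0 : ℝ) 1).indicator (fun _ ↦ C) s,
      lintegral_indicator_const measurableSet_Ico]
    simp
  have hinv (x : E) (t : ℝ) : Φ (x + t • b i) = Φ x := by
    have hproj : (ℝ ∙ b i)ᗮ.orthogonalProjectionOnto (b i) = 0 :=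
      Submodule.orthogonalProjectionOnto_apply_of_mem_orthogonal
        (Submodule.le_orthogonal_orthogonal _ (Submodule.mem_span_singleton_self _))
    simp only [Φ, map_add, map_smul, hproj, smul_zero, add_zero]
  have hW : Measurable W := by
    have hWeq : W = (b.coord i ⁻¹' Ico (0 : ℝ) 1).indicator Φ := by
      ext x
      simp only [W, indicator, mem_preimage]
    rw [hWeq]
    exact (hP.comp (Submodule.orthogonalProjectionOnto _).continuous.measurable).indicator
      ((b.coord i).continuous_of_finiteDimensional.measurable measurableSet_Ico)
  have hcoords : ∫⁻ c, W (b.equivFun.symm c) = ∫⁻ z, Φ (b.equivFun.symm (i.insertNth 0 z)) := by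
    have hWT : Measurable fun c ↦ W (b.equivFun.symm c) :=
      hW.comp b.equivFun.symm.toLinearMap.continuous_of_finiteDimensional.measurable
    refine (lintegral_pi_eq_lintegral_insertNth volume i hWT).trans (lintegral_congr fun z ↦ ?_)
    refine (lintegral_congr fun t ↦ ?_).trans (hstrip 0 _)
    simp only [W, Basis.coord_equivFun_symm, Fin.insertNth_apply_same, zero_add]
    rw [equivFun_symm_insertNth, hinv]
  have hfibers (y : (ℝ ∙ b i)ᗮ) : ∫⁻ s : ℝ, W (y + s • b i) = P y := by
    refine (lintegral_congr fun s ↦ ?_).trans (hstrip (b.coord i y) (P y))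
    simp only [W, hinv]
    simp [Φ]
  rw [← hcoords, ← lintegral_eq_mul_lintegral_equivFun_symm,
    lintegral_eq_mul_lintegral_orthogonal (b.ne_zero i) hW.aemeasurable, lintegral_congr hfibers]

end ObliqueCoordinates

section LoomisWhitneyBound

variable {k : ℕ} {f : Eucl (k + 1) → ℝ} (e : OrthonormalBasis (Fin (k + 1)) ℝ (Eucl (k + 1)))
  (b : Basis (Fin (k + 1)) ℝ (Eucl (k + 1)))

theorem IsLogConcaveDensity.exists_removeNth_majorant (hf : IsLogConcaveDensity f)
    (i : Fin (k + 1)) :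
    ∃ Q : (Fin k → ℝ) → ℝ≥0∞, Measurable Q ∧
      (∀ c, ENNReal.ofReal (f (b.equivFun.symm c)) ≤ Q (i.removeNth c)) ∧
      ∫⁻ z, Q z =
        ENNReal.ofReal (‖b i‖ * projL1 f (ℝ ∙ b i)ᗮ / |e.toBasis.det b|) := by
  obtain ⟨P, hPm, hP, hPint⟩ := hf.exists_measurable_fiber_majorant (b.ne_zero i)
  have hdet : 0 < |e.toBasis.det b| := abs_pos.2 (e.toBasis.isUnit_det b).ne_zero
  set proj := (ℝ ∙ b i)ᗮ.orthogonalProjectionOnto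
  refine ⟨fun z ↦ P (proj (b.equivFun.symm (i.insertNth 0 z))),
    hPm.comp (proj.continuous.measurable.comp
      (b.equivFun.symm.toLinearMap.continuous_of_finiteDimensional.measurable.comp
        ((measurable_insertNth i).comp (measurable_prodMk_left (x := 0))))),
    fun c ↦ ?_, ?_⟩
  · set x := b.equivFun.symm (i.insertNth 0 (i.removeNth c))
    have hx : x - proj x ∈ ℝ ∙ b i :=
      (Submodule.orthogonal_orthogonal (ℝ ∙ b i)).le
        (Submodule.sub_starProjection_mem_orthogonal x)
    obtain ⟨t, ht⟩ := Submodule.mem_span_singleton.1 hx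
    have hfiber : b.equivFun.symm c = proj x + (t + c i) • b i := by
      rw [← Fin.insertNth_self_removeNth i c, equivFun_symm_insertNth, Fin.insertNth_apply_same,
        add_smul, ht]
      simp only [x]
      abel
    rw [hfiber]
    exact hP _ _
  · rw [ENNReal.ofReal_div_of_pos hdet, ENNReal.eq_div_iff (by simpa using hdet)
      ENNReal.ofReal_ne_top, lintegral_orthogonalProjectionOnto_insertNth e b i hPm, hPint,
      ENNReal.ofReal_mul (norm_nonneg _)]

theorem IsLogConcaveDensity.lintegral_rpow_le (hk : k ≠ 0) (hf : IsLogConcaveDensity f) :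
    ∫⁻ x, ENNReal.ofReal (f x) ^ (1 + (k : ℝ)⁻¹) ≤
      ENNReal.ofReal (|e.toBasis.det b| *
        (∏ i, ‖b i‖ * projL1 f (ℝ ∙ b i)ᗮ / |e.toBasis.det b|) ^ (k : ℝ)⁻¹) := by
  choose Q hQm hQ hQint using hf.exists_removeNth_majorant e b
  have hside (i) : 0 ≤ ‖b i‖ * projL1 f (ℝ ∙ b i)ᗮ / |e.toBasis.det b| := by
    have := hf.projL1_nonneg (ℝ ∙ b i)ᗮ
    positivity
  rw [lintegral_eq_mul_lintegral_equivFun_symm e b, ENNReal.ofReal_mul (abs_nonneg _)]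
  gcongr
  calc ∫⁻ c, ENNReal.ofReal (f (b.equivFun.symm c)) ^ (1 + (k : ℝ)⁻¹)
      = ∫⁻ c, ∏ _i : Fin (k + 1), ENNReal.ofReal (f (b.equivFun.symm c)) ^ (k : ℝ)⁻¹ := by
        simp only [Finset.prod_const, Finset.card_univ, Fintype.card_fin, ← ENNReal.rpow_natCast,
          ← ENNReal.rpow_mul]
        congr! 3
        push_cast
        field_simp
    _ ≤ ∫⁻ c : Fin (k + 1) → ℝ, ∏ i, Q i (i.removeNth c) ^ (k : ℝ)⁻¹ := by
        refine lintegral_mono fun c ↦ Finset.prod_le_prod' fun i _ ↦ ?_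
        exact ENNReal.rpow_le_rpow (hQ i c) (by positivity)
    _ ≤ ∏ i, (∫⁻ z, Q i z) ^ (k : ℝ)⁻¹ := loomis_whitney volume hk hQm
    _ = _ := by
        rw [ENNReal.prod_rpow_of_nonneg (by positivity),
          ← ENNReal.ofReal_rpow_of_nonneg (Finset.prod_nonneg fun i _ ↦ hside i) (by positivity),
          ENNReal.ofReal_prod_of_nonneg fun i _ ↦ hside i]
        simp only [hQint]

end LoomisWhitneyBound

/-- Log-concavity gives `f x₀ ^ (p - 1) * f x ≤ f (p⁻¹ x + (1 - p⁻¹) x₀) ^ p`. -/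
theorem IsLogConcaveDensity.rpow_mul_integral_le_lintegral_rpow {n : ℕ} {f : Eucl n → ℝ}
    (hf : IsLogConcaveDensity f) {p : ℝ} (hp : 1 < p) (x₀ : Eucl n) :
    ENNReal.ofReal (f x₀ ^ (p - 1) * ∫ x, f x) ≤
      ENNReal.ofReal (p ^ n) * ∫⁻ x, ENNReal.ofReal (f x) ^ p := by
  have hp₀ : 0 < p := by linarith
  have hpoint (x : Eucl n) : ENNReal.ofReal (f x₀ ^ (p - 1)) * ENNReal.ofReal (f x) ≤
      ENNReal.ofReal (f (p⁻¹ • x + (1 - p⁻¹) • x₀)) ^ p := by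
    rw [← ENNReal.ofReal_mul (Real.rpow_nonneg (hf.nonneg _) _),
      ENNReal.ofReal_rpow_of_nonneg (hf.nonneg _) hp₀.le]
    refine ENNReal.ofReal_le_ofReal ?_
    have hx := Real.rpow_nonneg (hf.nonneg x) p⁻¹
    have hx₀ := Real.rpow_nonneg (hf.nonneg x₀) (1 - p⁻¹)
    calc f x₀ ^ (p - 1) * f x = (f x ^ p⁻¹ * f x₀ ^ (1 - p⁻¹)) ^ p := by
          rw [Real.mul_rpow hx hx₀, ← Real.rpow_mul (hf.nonneg x), ← Real.rpow_mul (hf.nonneg x₀),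
            inv_mul_cancel₀ hp₀.ne', Real.rpow_one, sub_mul, one_mul, inv_mul_cancel₀ hp₀.ne',
            mul_comm]
      _ ≤ _ := by
          gcongr
          exact hf.isLogConcave x x₀ p⁻¹ (by positivity) (inv_lt_one_of_one_lt₀ hp)
  calc ENNReal.ofReal (f x₀ ^ (p - 1) * ∫ x, f x)
      = ∫⁻ x, ENNReal.ofReal (f x₀ ^ (p - 1)) * ENNReal.ofReal (f x) := by
        rw [lintegral_const_mul' _ _ ENNReal.ofReal_ne_top, hf.lintegral_ofReal,
          ENNReal.ofReal_mul (Real.rpow_nonneg (hf.nonneg _) _)]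
    _ ≤ ∫⁻ x, ENNReal.ofReal (f (p⁻¹ • x + (1 - p⁻¹) • x₀)) ^ p := lintegral_mono hpoint
    _ = _ := by
        rw [lintegral_comp_smul_add volume (fun x ↦ ENNReal.ofReal (f x) ^ p) (by positivity)]
        simp [abs_of_pos hp₀]

theorem IsLogConcaveDensity.supNorm_mul_integral_pow_le {k : ℕ} {f : Eucl (k + 1) → ℝ}
    (e : OrthonormalBasis (Fin (k + 1)) ℝ (Eucl (k + 1)))
    (b : Basis (Fin (k + 1)) ℝ (Eucl (k + 1))) (hk : k ≠ 0) (hf : IsLogConcaveDensity f) :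
    supNorm f * (∫ x, f x) ^ k ≤ (1 + (k : ℝ)⁻¹) ^ ((k + 1) * k) *
      ((∏ i, ‖b i‖ * projL1 f (ℝ ∙ b i)ᗮ) / |e.toBasis.det b|) := by
  set D := |e.toBasis.det b|
  have hD : 0 < D := abs_pos.2 (e.toBasis.isUnit_det b).ne_zero
  set I := ∫ x, f x
  have hI : 0 < I := hf.integral_pos
  set A := ∏ i, ‖b i‖ * projL1 f (ℝ ∙ b i)ᗮ / D
  have hA : 0 ≤ A := Finset.prod_nonneg fun i _ ↦ by
    have := hf.projL1_nonneg (ℝ ∙ b i)ᗮ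
    positivity
  have hroot (a : ℝ) (ha : 0 ≤ a) : (a ^ (k : ℝ)⁻¹) ^ k = a := Real.rpow_inv_natCast_pow ha hk
  have hpow : D ^ k * A = (∏ i, ‖b i‖ * projL1 f (ℝ ∙ b i)ᗮ) / D := by
    simp only [A, Finset.prod_div_distrib, Finset.prod_const, Finset.card_univ, Fintype.card_fin]
    field_simp
    ring
  rw [supNorm, Real.iSup_mul_of_nonneg (by positivity)]
  refine ciSup_le fun x₀ ↦ ?_
  have hx₀ : f x₀ ^ (k : ℝ)⁻¹ * I ≤ (1 + (k : ℝ)⁻¹) ^ (k + 1) * (D * A ^ (k : ℝ)⁻¹) := by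
    rw [← ENNReal.ofReal_le_ofReal_iff (by positivity),
      ENNReal.ofReal_mul (p := (1 + (k : ℝ)⁻¹) ^ (k + 1)) (by positivity)]
    have hp : 1 < 1 + (k : ℝ)⁻¹ := lt_add_of_pos_right _ (by positivity)
    have hLp := hf.rpow_mul_integral_le_lintegral_rpow hp x₀
    rw [add_sub_cancel_left] at hLp
    exact hLp.trans (mul_le_mul_right (hf.lintegral_rpow_le e b hk) _)
  calc f x₀ * I ^ k = (f x₀ ^ (k : ℝ)⁻¹ * I) ^ k := by rw [mul_pow, hroot _ (hf.nonneg _)]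
    _ ≤ ((1 + (k : ℝ)⁻¹) ^ (k + 1) * (D * A ^ (k : ℝ)⁻¹)) ^ k := by
        have := Real.rpow_nonneg (hf.nonneg x₀) (k : ℝ)⁻¹
        gcongr
    _ = _ := by rw [mul_pow, mul_pow, hroot A hA, ← pow_mul, hpow]

section Andreief

variable {ι : Type*} [Fintype ι] [DecidableEq ι]

theorem sum_sum_sign_mul_prod_eq_factorial_mul_det {R : Type*} [CommRing R] (M : Matrix ι ι R) :
    ∑ σ : Equiv.Perm ι, ∑ τ : Equiv.Perm ι,
      ((σ.sign : ℤ) * (τ.sign : ℤ) : R) * ∏ i, M (σ i) (τ i) =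
        (Fintype.card ι).factorial * M.det := by
  have hinner (σ : Equiv.Perm ι) : ∑ τ : Equiv.Perm ι,
      ((σ.sign : ℤ) * (τ.sign : ℤ) : R) * ∏ i, M (σ i) (τ i) = M.det := by
    have hsign : ((σ.sign : ℤ) * (σ.sign : ℤ) : R) = 1 := by
      rw [← Int.cast_mul, ← Units.val_mul, Int.units_mul_self, Units.val_one, Int.cast_one]
    calc _ = (σ.sign : ℤ) * (M.submatrix σ id).transpose.det := by
          rw [Matrix.det_apply', Finset.mul_sum]
          simp only [mul_assoc, Matrix.transpose_apply, Matrix.submatrix_apply, id_eq]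
      _ = M.det := by
          rw [Matrix.det_transpose, Matrix.det_permute, ← mul_assoc, hsign, one_mul]
  simp only [hinner, Finset.sum_const, Finset.card_univ, Fintype.card_perm, nsmul_eq_mul]

theorem det_mul_det_eq_sum_sum {R : Type*} [CommRing R] (A B : Matrix ι ι R) :
    A.det * B.det = ∑ σ : Equiv.Perm ι, ∑ τ : Equiv.Perm ι,
      ((σ.sign : ℤ) * (τ.sign : ℤ) : R) * ∏ i, A i (σ i) * B i (τ i) := by
  rw [← A.det_transpose, ← B.det_transpose, Matrix.det_apply', Matrix.det_apply',
    Finset.sum_mul_sum]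
  simp only [Matrix.transpose_apply, Finset.prod_mul_distrib]
  exact Finset.sum_congr rfl fun σ _ ↦ Finset.sum_congr rfl fun τ _ ↦ by ring

variable {α 𝕜 : Type*} [MeasurableSpace α] [RCLike 𝕜] {μ : Measure α} [SigmaFinite μ]
  {φ ψ : ι → α → 𝕜}

theorem integrable_det_mul_det (h : ∀ i j, Integrable (fun x ↦ φ i x * ψ j x) μ) :
    Integrable (fun x : ι → α ↦ (Matrix.of fun i j ↦ φ j (x i)).det *
      (Matrix.of fun i j ↦ ψ j (x i)).det) (Measure.pi fun _ ↦ μ) := by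
  simp only [det_mul_det_eq_sum_sum, Matrix.of_apply]
  exact integrable_finsetSum _ fun σ _ ↦ integrable_finsetSum _ fun τ _ ↦
    (Integrable.fintype_prod (f := fun i x ↦ φ (σ i) x * ψ (τ i) x) fun i ↦ h _ _).const_mul _

/-- Andréief's identity, the continuous analogue of the Cauchy–Binet formula. -/
theorem integral_det_mul_det (h : ∀ i j, Integrable (fun x ↦ φ i x * ψ j x) μ) :
    ∫ x : ι → α, (Matrix.of fun i j ↦ φ j (x i)).det * (Matrix.of fun i j ↦ ψ j (x i)).det
        ∂(Measure.pi fun _ ↦ μ) =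
      (Fintype.card ι).factorial * (Matrix.of fun i j ↦ ∫ x, φ i x * ψ j x ∂μ).det := by
  have hterm (σ τ : Equiv.Perm ι) : Integrable (fun x : ι → α ↦
      ((σ.sign : ℤ) * (τ.sign : ℤ) : 𝕜) * ∏ i, φ (σ i) (x i) * ψ (τ i) (x i))
        (Measure.pi fun _ ↦ μ) :=
    (Integrable.fintype_prod (f := fun i x ↦ φ (σ i) x * ψ (τ i) x) fun i ↦ h _ _).const_mul _
  simp only [det_mul_det_eq_sum_sum, Matrix.of_apply]
  rw [← sum_sum_sign_mul_prod_eq_factorial_mul_det,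
    integral_finsetSum _ fun σ _ ↦ integrable_finsetSum _ fun τ _ ↦ hterm σ τ]
  refine Finset.sum_congr rfl fun σ _ ↦ ?_
  rw [integral_finsetSum _ fun τ _ ↦ hterm σ τ]
  refine Finset.sum_congr rfl fun τ _ ↦ ?_
  rw [integral_const_mul, integral_fintype_prod_eq_prod fun i x ↦ φ (σ i) x * ψ (τ i) x]
  rfl

end Andreief

section GaussianComparison

variable {E : Type*} [NormedAddCommGroup E] [InnerProductSpace ℝ E] [FiniteDimensional ℝ E]
  [MeasurableSpace E] [BorelSpace E] {T : E →ₗ[ℝ] E}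

theorem integral_exp_neg_half_norm_sq_comp (hT : LinearMap.det T ≠ 0) :
    ∫ x, Real.exp (-(1 / 2) * ‖T x‖ ^ 2) =
      (2 * Real.pi) ^ (finrank ℝ E / 2 : ℝ) / |LinearMap.det T| := by
  have hmap := Measure.map_linearMap_addHaar_eq_smul_addHaar (μ := (volume : Measure E)) hT
  calc ∫ x, Real.exp (-(1 / 2) * ‖T x‖ ^ 2)
      = ∫ y, Real.exp (-(1 / 2) * ‖y‖ ^ 2) ∂(volume.map T) :=
        (integral_map (f := fun y ↦ Real.exp (-(1 / 2) * ‖y‖ ^ 2))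
          T.continuous_of_finiteDimensional.measurable.aemeasurable (by fun_prop)).symm
    _ = _ := by
      rw [hmap, integral_smul_measure, ENNReal.toReal_ofReal (abs_nonneg _),
        GaussianFourier.integral_rexp_neg_mul_sq_norm (by norm_num), abs_inv, smul_eq_mul,
        inv_mul_eq_div, div_div_eq_mul_div, div_one, mul_comm Real.pi]

/-- Jensen's inequality for `exp`, followed by comparison with the total Gaussian integral. -/
theorem exp_neg_half_integral_norm_sq_le {μ : Measure E} [IsProbabilityMeasure μ] {c : ℝ≥0∞}
    (hc : c ≠ ⊤) (hμ : μ ≤ c • volume) (hT : LinearMap.det T ≠ 0)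
    (hint : Integrable (fun x ↦ ‖T x‖ ^ 2) μ) :
    Real.exp (-(1 / 2) * ∫ x, ‖T x‖ ^ 2 ∂μ) ≤
      c.toReal * ((2 * Real.pi) ^ (finrank ℝ E / 2 : ℝ) / |LinearMap.det T|) := by
  have hgauss : Integrable fun x ↦ Real.exp (-(1 / 2) * ‖T x‖ ^ 2) :=
    .of_integral_ne_zero (by rw [integral_exp_neg_half_norm_sq_comp hT]; positivity)
  calc Real.exp (-(1 / 2) * ∫ x, ‖T x‖ ^ 2 ∂μ)
      = Real.exp (∫ x, -(1 / 2) * ‖T x‖ ^ 2 ∂μ) := by rw [integral_const_mul]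
    _ ≤ ∫ x, Real.exp (-(1 / 2) * ‖T x‖ ^ 2) ∂μ :=
      convexOn_exp.map_integral_le Real.continuous_exp.continuousOn isClosed_univ
        (.of_forall fun _ ↦ mem_univ _) (hint.const_mul _)
        ((hgauss.smul_measure hc).mono_measure hμ)
    _ ≤ ∫ x, Real.exp (-(1 / 2) * ‖T x‖ ^ 2) ∂(c • volume) :=
      integral_mono_measure hμ (.of_forall fun _ ↦ (Real.exp_pos _).le) (hgauss.smul_measure hc)
    _ = _ := by rw [integral_smul_measure, integral_exp_neg_half_norm_sq_comp hT, smul_eq_mul]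

end GaussianComparison

section SecondMoment

variable {ι : Type*} [Fintype ι] {μ : Measure (EuclideanSpace ℝ ι)}

/-- The matrix of second moments `∫ xᵢ xⱼ dμ`, about the origin rather than about the mean. Its
determinant measures how far a random point is from lying in a hyperplane. -/
def secondMomentMatrix (μ : Measure (EuclideanSpace ℝ ι)) : Matrix ι ι ℝ :=
  Matrix.of fun i j ↦ ∫ x, x i * x j ∂μ

theorem dotProduct_mulVec_eq_sum_sum (M : Matrix ι ι ℝ) (x : ι → ℝ) :
    x ⬝ᵥ M.mulVec x = ∑ i, ∑ j, M i j * (x j * x i) := by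
  simp only [dotProduct, Matrix.mulVec, Finset.mul_sum]
  exact Finset.sum_congr rfl fun i _ ↦ Finset.sum_congr rfl fun j _ ↦ by ring

theorem integrable_dotProduct_mulVec (hμ : ∀ i j, Integrable (fun x ↦ x i * x j) μ)
    (M : Matrix ι ι ℝ) : Integrable (fun x ↦ x.ofLp ⬝ᵥ M.mulVec x.ofLp) μ := by
  simp only [dotProduct_mulVec_eq_sum_sum]
  exact integrable_finsetSum _ fun i _ ↦ integrable_finsetSum _ fun j _ ↦ (hμ j i).const_mul _

theorem integral_dotProduct_mulVec (hμ : ∀ i j, Integrable (fun x ↦ x i * x j) μ)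
    (M : Matrix ι ι ℝ) :
    ∫ x, x.ofLp ⬝ᵥ M.mulVec x.ofLp ∂μ = (M * secondMomentMatrix μ).trace := by
  have hterm (i j : ι) : Integrable (fun x : EuclideanSpace ℝ ι ↦ M i j * (x j * x i)) μ :=
    (hμ j i).const_mul _
  calc ∫ x, x.ofLp ⬝ᵥ M.mulVec x.ofLp ∂μ
      = ∫ x : EuclideanSpace ℝ ι, ∑ i, ∑ j, M i j * (x j * x i) ∂μ := by
        simp only [dotProduct_mulVec_eq_sum_sum]
    _ = ∑ i, ∑ j, ∫ x : EuclideanSpace ℝ ι, M i j * (x j * x i) ∂μ := by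
        rw [integral_finsetSum _ fun i _ ↦ integrable_finsetSum _ fun j _ ↦ hterm i j]
        exact Finset.sum_congr rfl fun i _ ↦ integral_finsetSum _ fun j _ ↦ hterm i j
    _ = ∑ i, ∑ j, M i j * secondMomentMatrix μ j i := by
        simp only [integral_const_mul, secondMomentMatrix, Matrix.of_apply]
    _ = (M * secondMomentMatrix μ).trace := rfl

theorem posSemidef_secondMomentMatrix {ι : Type*} [Finite ι] {μ : Measure (EuclideanSpace ℝ ι)}
    (hμ : ∀ i j, Integrable (fun x ↦ x i * x j) μ) : (secondMomentMatrix μ).PosSemidef := by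
  have := Fintype.ofFinite ι
  refine .of_dotProduct_mulVec_nonneg ?_ fun a ↦ ?_
  · ext i j
    simp only [secondMomentMatrix, Matrix.conjTranspose_apply, Matrix.of_apply, star_trivial,
      mul_comm]
  · have hsq (x : ι → ℝ) : x ⬝ᵥ (Matrix.vecMulVec a a).mulVec x = (a ⬝ᵥ x) ^ 2 := by
      rw [Matrix.vecMulVec_mulVec]
      simp [dotProduct_comm, sq]
    calc 0 ≤ ∫ x : EuclideanSpace ℝ ι, (a ⬝ᵥ x.ofLp) ^ 2 ∂μ :=
          integral_nonneg fun _ ↦ sq_nonneg _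
      _ = (Matrix.vecMulVec a a * secondMomentMatrix μ).trace := by
          rw [← integral_dotProduct_mulVec hμ]
          simp only [hsq]
      _ = _ := by
          rw [Matrix.vecMulVec_mul, Matrix.trace_vecMulVec, star_trivial,
            Matrix.dotProduct_mulVec, dotProduct_comm]

variable [DecidableEq ι] [IsProbabilityMeasure μ] {c : ℝ≥0∞}

theorem exp_neg_half_trace_le (hc : c ≠ ⊤) (hμc : μ ≤ c • volume)
    (hμ : ∀ i j, Integrable (fun x ↦ x i * x j) μ) {A : Matrix ι ι ℝ} (hA : A.det ≠ 0) :
    Real.exp (-(1 / 2) * (A.transpose * A * secondMomentMatrix μ).trace) ≤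
      c.toReal * ((2 * Real.pi) ^ (Fintype.card ι / 2 : ℝ) / |A.det|) := by
  have hdet : LinearMap.det (Matrix.toEuclideanLin A) = A.det := by
    rw [Matrix.toEuclideanLin_eq_toLin_orthonormal, LinearMap.det_toLin]
  have hnorm (x : EuclideanSpace ℝ ι) :
      ‖Matrix.toEuclideanLin A x‖ ^ 2 = x.ofLp ⬝ᵥ (A.transpose * A).mulVec x.ofLp := by
    rw [← Matrix.mulVec_mulVec, Matrix.dotProduct_mulVec, Matrix.vecMul_transpose,
      EuclideanSpace.real_norm_sq_eq]
    simp [dotProduct, sq]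
  have hle := exp_neg_half_integral_norm_sq_le hc hμc (T := Matrix.toEuclideanLin A)
    (hdet ▸ hA) (by simpa only [hnorm] using integrable_dotProduct_mulVec hμ _)
  simpa only [hnorm, integral_dotProduct_mulVec hμ, hdet, finrank_euclideanSpace] using hle

theorem one_le_mul_det_of_trace_le (hc : c ≠ ⊤) (hμc : μ ≤ c • volume)
    (hμ : ∀ i j, Integrable (fun x ↦ x i * x j) μ) {T : Matrix ι ι ℝ} (hT : T.PosDef)
    (htr : (T⁻¹ * secondMomentMatrix μ).trace ≤ Fintype.card ι) :
    1 ≤ c.toReal ^ 2 * (2 * Real.pi * Real.exp 1) ^ Fintype.card ι * T.det := by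
  obtain ⟨A, hA⟩ : ∃ A : Matrix ι ι ℝ, T⁻¹ = A.transpose * A := by
    open scoped MatrixOrder in
    obtain ⟨A, hA⟩ := CStarAlgebra.nonneg_iff_eq_star_mul_self.mp hT.inv.posSemidef.nonneg
    exact ⟨A, by rw [hA, Matrix.star_eq_conjTranspose,
      Matrix.conjTranspose_eq_transpose_of_trivial]⟩
  have hdetA : A.det ^ 2 = T.det⁻¹ := by
    rw [sq, ← Ring.inverse_eq_inv', ← Matrix.det_nonsing_inv, hA, Matrix.det_mul,
      Matrix.det_transpose]
  have hA0 : A.det ≠ 0 := fun h ↦ by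
    rw [h, zero_pow two_ne_zero, zero_eq_inv] at hdetA
    exact hT.det_pos.ne hdetA
  have hexp := exp_neg_half_trace_le hc hμc hμ hA0
  rw [← hA] at hexp
  have hsq : Real.exp (-(Fintype.card ι : ℝ)) ≤
      c.toReal ^ 2 * (2 * Real.pi) ^ Fintype.card ι * T.det := by
    calc Real.exp (-(Fintype.card ι : ℝ))
        = Real.exp (-(1 / 2) * Fintype.card ι) ^ 2 := by rw [← Real.exp_nat_mul]; ring_nf
      _ ≤ (c.toReal * ((2 * Real.pi) ^ (Fintype.card ι / 2 : ℝ) / |A.det|)) ^ 2 := by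
        gcongr
        exact le_trans (Real.exp_le_exp.2 (by linarith)) hexp
      _ = _ := by
        rw [mul_pow, div_pow, sq_abs, hdetA, ← Real.rpow_natCast (_ ^ _) 2, ← Real.rpow_mul
          (by positivity), Nat.cast_ofNat, div_mul_cancel₀ _ two_ne_zero, Real.rpow_natCast,
          div_inv_eq_mul, mul_assoc]
  calc 1 = Real.exp (-(Fintype.card ι : ℝ)) * Real.exp 1 ^ Fintype.card ι := by
        rw [← Real.exp_nat_mul, ← Real.exp_add, mul_one, neg_add_cancel, Real.exp_zero]
    _ ≤ c.toReal ^ 2 * (2 * Real.pi) ^ Fintype.card ι * T.det *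
        Real.exp 1 ^ Fintype.card ι := by gcongr
    _ = _ := by rw [mul_pow (2 * Real.pi)]; ring

theorem one_le_mul_det_secondMomentMatrix (hc : c ≠ ⊤) (hμc : μ ≤ c • volume)
    (hμ : ∀ i j, Integrable (fun x ↦ x i * x j) μ) :
    1 ≤ c.toReal ^ 2 * (2 * Real.pi * Real.exp 1) ^ Fintype.card ι *
      (secondMomentMatrix μ).det := by
  set S := secondMomentMatrix μ
  have hS : S.PosSemidef := posSemidef_secondMomentMatrix hμ
  have hpert (ε : ℝ) (hε : 0 < ε) : 1 ≤ c.toReal ^ 2 *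
      (2 * Real.pi * Real.exp 1) ^ Fintype.card ι * (S + ε • 1).det := by
    have hT : (S + ε • (1 : Matrix ι ι ℝ)).PosDef :=
      Matrix.PosDef.posSemidef_add hS (Matrix.PosDef.one.smul hε)
    refine one_le_mul_det_of_trace_le hc hμc hμ hT ?_
    have hsplit : (S + ε • 1)⁻¹ * S = 1 - ε • (S + ε • 1)⁻¹ := by
      rw [eq_sub_iff_add_eq, ← Matrix.mul_one (ε • (S + ε • 1)⁻¹), Matrix.smul_mul,
        ← Matrix.mul_smul, ← Matrix.mul_add,
        Matrix.nonsing_inv_mul _ hT.det_pos.ne'.isUnit]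
    rw [hsplit, Matrix.trace_sub, Matrix.trace_one, Matrix.trace_smul, smul_eq_mul]
    exact sub_le_self _ (mul_nonneg hε.le hT.inv.posSemidef.trace_nonneg)
  have hcont : Continuous fun ε : ℝ ↦ c.toReal ^ 2 *
      (2 * Real.pi * Real.exp 1) ^ Fintype.card ι * (S + ε • 1).det := by fun_prop
  refine ge_of_tendsto (x := 𝓝[>] (0 : ℝ)) ?_ (eventually_mem_nhdsWithin.mono hpert)
  simpa only [zero_smul, add_zero] using (hcont.tendsto 0).mono_left nhdsWithin_le_nhds

end SecondMoment

/-- The bound holds on average over `n` independent uniform points of `K`. -/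
theorem exists_mem_factorial_mul_volume_sq_le {n : ℕ} {K : Set (Eucl n)} (hKm : MeasurableSet K)
    (hKb : Bornology.IsBounded K) (hK : volume K ≠ 0) :
    ∃ v : Fin n → Eucl n, (∀ i, v i ∈ K) ∧ n.factorial * (volume K).toReal ^ 2 ≤
      (2 * Real.pi * Real.exp 1) ^ n * (Matrix.of fun i j ↦ v i j).det ^ 2 := by
  have hKtop : volume K ≠ ⊤ := hKb.measure_lt_top.ne
  set μ : Measure (Eucl n) := ProbabilityTheory.cond volume K with hμdef
  have : IsProbabilityMeasure μ := ProbabilityTheory.cond_isProbabilityMeasure_of_finite hK hKtop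
  have hae : ∀ᵐ x ∂μ, x ∈ K := ProbabilityTheory.ae_cond_mem hKm
  have hmom (i j : Fin n) : Integrable (fun x : Eucl n ↦ x i * x j) μ := by
    obtain ⟨R, hR⟩ := hKb.exists_norm_le
    refine .of_bound (by fun_prop) (R * R) (hae.mono fun x hx ↦ ?_)
    rw [norm_mul]
    have hi := (PiLp.norm_apply_le x i).trans (hR x hx)
    exact mul_le_mul hi ((PiLp.norm_apply_le x j).trans (hR x hx)) (norm_nonneg _)
      ((norm_nonneg _).trans hi)
  have hμle : μ ≤ (volume K)⁻¹ • volume := by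
    rw [hμdef, ProbabilityTheory.cond]
    gcongr
    exact Measure.restrict_le_self
  have hdet := one_le_mul_det_secondMomentMatrix (ENNReal.inv_ne_top.2 hK) hμle hmom
  rw [Fintype.card_fin, ENNReal.toReal_inv, inv_pow, mul_assoc,
    ← div_eq_inv_mul, one_le_div (pow_pos (ENNReal.toReal_pos hK hKtop) 2)] at hdet
  have hpi : ∀ᵐ v ∂(Measure.pi fun _ : Fin n ↦ μ), ∀ i, v i ∈ K :=
    ae_all_iff.2 fun i ↦ Measure.tendsto_eval_ae_ae.eventually hae
  obtain ⟨v, hv, hle⟩ := exists_notMem_null_integral_le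
    (integrable_det_mul_det (φ := fun i (x : Eucl n) ↦ x i) hmom) (ae_iff.1 hpi)
  rw [integral_det_mul_det hmom, Fintype.card_fin, ← sq] at hle
  refine ⟨v, by simpa using hv, ?_⟩
  calc (n.factorial : ℝ) * (volume K).toReal ^ 2
      ≤ n.factorial * ((2 * Real.pi * Real.exp 1) ^ n * (secondMomentMatrix μ).det) := by gcongr
    _ = (2 * Real.pi * Real.exp 1) ^ n * (n.factorial * (secondMomentMatrix μ).det) := by ring
    _ ≤ _ := by gcongr; exact hle

section LevelSet

theorem lintegral_Ioi_exp_neg_mul_pow (n : ℕ) :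
    ∫⁻ u in Ioi (0 : ℝ), ENNReal.ofReal (Real.exp (-u) * u ^ n) =
      ENNReal.ofReal n.factorial := by
  have hpos : (0 : ℝ) < n + 1 := by positivity
  have hint := Real.GammaIntegral_convergent hpos
  have hGamma := Real.Gamma_eq_integral hpos
  simp only [add_sub_cancel_right, Real.rpow_natCast] at hint hGamma
  rw [← Real.Gamma_nat_eq_factorial, hGamma, ofReal_integral_eq_lintegral_ofReal hint]
  exact (ae_restrict_mem measurableSet_Ioi).mono fun u (hu : 0 < u) ↦
    mul_nonneg (Real.exp_pos _).le (pow_nonneg hu.le n)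

theorem lintegral_Ici_exp_neg_mul_pow_lt {a : ℝ} (ha : 0 < a) (n : ℕ) :
    ∫⁻ u in Ici a, ENNReal.ofReal (Real.exp (-u) * u ^ n) < ENNReal.ofReal n.factorial := by
  set g : ℝ → ℝ≥0∞ := fun u ↦ ENNReal.ofReal (Real.exp (-u) * u ^ n)
  have hsplit : (∫⁻ u in Ici a, g u) + ∫⁻ u in Ioo 0 a, g u = ENNReal.ofReal n.factorial := by
    rw [add_comm, ← lintegral_union measurableSet_Ici
      (disjoint_left.2 fun _ hx ↦ not_le.2 hx.2), Ioo_union_Ici_eq_Ioi ha]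
    exact lintegral_Ioi_exp_neg_mul_pow n
  have hpos : ∫⁻ u in Ioo 0 a, g u ≠ 0 := by
    refine ((setLIntegral_pos_iff (by fun_prop)).2 ?_).ne'
    rw [inter_eq_right.2 fun u (hu : u ∈ Ioo 0 a) ↦ ?_]
    · simpa using ha
    · have : 0 < u := hu.1
      exact (ENNReal.ofReal_pos.2 (by positivity)).ne'
  rw [← hsplit]
  refine ENNReal.lt_add_right (fun htop ↦ ?_) hpos
  rw [htop, top_add] at hsplit
  exact ENNReal.ofReal_ne_top hsplit.symm

theorem lintegral_Ici_exp_neg_mul_add_pow_lt {a : ℝ} (ha : 0 < a) (n : ℕ) :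
    ∫⁻ t in Ici (0 : ℝ), ENNReal.ofReal (Real.exp (-t) * (a + t) ^ n) <
      ENNReal.ofReal (Real.exp a * n.factorial) := by
  have hpre : (fun t : ℝ ↦ a + t) ⁻¹' Ici a = Ici 0 := by simp
  have hshift : ∫⁻ t in Ici (0 : ℝ), ENNReal.ofReal (Real.exp (-t) * (a + t) ^ n) =
      ENNReal.ofReal (Real.exp a) * ∫⁻ u in Ici a, ENNReal.ofReal (Real.exp (-u) * u ^ n) := by
    rw [← lintegral_const_mul _ (by fun_prop), ← hpre,
      ← (measurePreserving_add_left volume a).setLIntegral_comp_preimage measurableSet_Ici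
        (by fun_prop)]
    refine lintegral_congr fun t ↦ ?_
    rw [← ENNReal.ofReal_mul (Real.exp_pos a).le, ← mul_assoc, ← Real.exp_add]
    ring_nf
  rw [hshift, ENNReal.ofReal_mul (Real.exp_pos a).le]
  exact ENNReal.mul_lt_mul_right (ENNReal.ofReal_pos.2 (Real.exp_pos a)).ne'
    ENNReal.ofReal_ne_top (lintegral_Ici_exp_neg_mul_pow_lt ha n)

theorem image_mul_exp_neg_Ici {M : ℝ} (hM : 0 < M) :
    (fun t : ℝ ↦ M * Real.exp (-t)) '' Ici 0 = Ioc 0 M := by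
  ext s
  constructor
  · rintro ⟨t, ht, rfl⟩
    exact ⟨by positivity, mul_le_of_le_one_right hM.le (Real.exp_le_one_iff.2 (neg_nonpos.2 ht))⟩
  · rintro ⟨hs, hsM⟩
    refine ⟨Real.log (M / s), Real.log_nonneg ((one_le_div hs).2 hsM), ?_⟩
    simp only [← Real.log_inv, inv_div, Real.exp_log (div_pos hs hM), mul_div_cancel₀ _ hM.ne']

/-- The layer-cake formula in the logarithmic variable `t = log (M / s)`. -/
theorem lintegral_eq_lintegral_exp_neg_mul_meas_le {α : Type*} [MeasurableSpace α]
    {μ : Measure α} {f : α → ℝ} {M : ℝ} (hM : 0 < M) (hf : AEMeasurable f μ) (hf0 : 0 ≤ᵐ[μ] f)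
    (hfM : ∀ᵐ x ∂μ, f x ≤ M) :
    ∫⁻ x, ENNReal.ofReal (f x) ∂μ = ∫⁻ t in Ici (0 : ℝ),
      ENNReal.ofReal (M * Real.exp (-t)) * μ {x | M * Real.exp (-t) ≤ f x} := by
  have hderiv (t : ℝ) (_ : t ∈ Ici (0 : ℝ)) :
      HasDerivWithinAt (fun t ↦ M * Real.exp (-t)) (-(M * Real.exp (-t))) (Ici 0) t :=
    (((hasDerivAt_neg t).exp.const_mul M).congr_deriv (by ring)).hasDerivWithinAt
  have hanti : AntitoneOn (fun t ↦ M * Real.exp (-t)) (Ici 0) := fun a _ b _ hab ↦ by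
    simp only
    gcongr
  have hzero : ∫⁻ s in Ioi M, μ {x | s ≤ f x} = 0 := by
    refine setLIntegral_eq_zero measurableSet_Ioi fun s (hs : M < s) ↦ ?_
    exact measure_eq_zero_iff_ae_notMem.2 (hfM.mono fun x hx ↦ not_le.2 (hx.trans_lt hs))
  calc ∫⁻ x, ENNReal.ofReal (f x) ∂μ
      = (∫⁻ s in Ioc 0 M, μ {x | s ≤ f x}) + ∫⁻ s in Ioi M, μ {x | s ≤ f x} := by
        rw [lintegral_eq_lintegral_meas_le μ hf0 hf, ← Ioc_union_Ioi_eq_Ioi hM.le,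
          lintegral_union measurableSet_Ioi (Ioc_disjoint_Ioi le_rfl)]
    _ = _ := by
        rw [hzero, add_zero, ← image_mul_exp_neg_Ici hM,
          lintegral_image_eq_lintegral_deriv_mul_of_antitoneOn measurableSet_Ici hderiv hanti]
        simp only [neg_neg]

variable {n : ℕ} {f : Eucl n → ℝ}

namespace IsLogConcaveDensity

theorem exists_lt_volume_superlevel (hn : n ≠ 0) (hf : IsLogConcaveDensity f) :
    ∃ t, 0 ≤ t ∧
      ENNReal.ofReal ((∫ x, f x) / (supNorm f * Real.exp n * n.factorial) * (n + t) ^ n) <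
        volume {x | supNorm f * Real.exp (-t) ≤ f x} := by
  by_contra! hcon
  have hM := hf.supNorm_pos
  have hI := hf.integral_pos
  set M := supNorm f
  set I := ∫ x, f x
  set c := I / (M * Real.exp n * n.factorial) with hc
  have : 0 < c := by positivity
  have hlt : ENNReal.ofReal I < ENNReal.ofReal I := calc
    ENNReal.ofReal I = ∫⁻ t in Ici (0 : ℝ),
        ENNReal.ofReal (M * Real.exp (-t)) * volume {x | M * Real.exp (-t) ≤ f x} := by
      rw [ofReal_integral_eq_lintegral_ofReal hf.integrable (.of_forall hf.nonneg),
        lintegral_eq_lintegral_exp_neg_mul_meas_le hM hf.integrable.aemeasurable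
          (.of_forall hf.nonneg) (.of_forall hf.le_supNorm)]
    _ ≤ ∫⁻ t in Ici (0 : ℝ), ENNReal.ofReal (M * c) *
        ENNReal.ofReal (Real.exp (-t) * (n + t) ^ n) := by
      refine setLIntegral_mono (by fun_prop) fun t ht ↦ ?_
      have : (0 : ℝ) ≤ t := ht
      rw [← ENNReal.ofReal_mul (by positivity), mul_mul_mul_comm,
        ENNReal.ofReal_mul (p := M * Real.exp (-t)) (by positivity)]
      exact mul_le_mul_right (hcon t ht) _
    _ = ENNReal.ofReal (M * c) *
        ∫⁻ t in Ici (0 : ℝ), ENNReal.ofReal (Real.exp (-t) * (n + t) ^ n) :=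
      lintegral_const_mul _ (by fun_prop)
    _ < ENNReal.ofReal (M * c) * ENNReal.ofReal (Real.exp n * n.factorial) :=
      ENNReal.mul_lt_mul_right (ENNReal.ofReal_pos.2 (by positivity)).ne' ENNReal.ofReal_ne_top
        (lintegral_Ici_exp_neg_mul_add_pow_lt (by positivity) n)
    _ = ENNReal.ofReal I := by
      rw [← ENNReal.ofReal_mul (by positivity), hc]
      field_simp
  exact hlt.false

theorem exists_vectors_norm_mul_projL1_le (hn : n ≠ 0) (hf : IsLogConcaveDensity f) :
    ∃ (v : Fin n → Eucl n) (L : ℝ), 0 < L ∧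
      (∀ i, ‖v i‖ * projL1 f (ℝ ∙ v i)ᗮ ≤ (∫ x, f x) * L) ∧
      ((∫ x, f x) * L ^ n) ^ 2 ≤ (2 * Real.pi * Real.exp 1 ^ 3) ^ n * n.factorial *
        (supNorm f * (Matrix.of fun i j ↦ v i j).det) ^ 2 := by
  obtain ⟨t, ht0, ht⟩ := hf.exists_lt_volume_superlevel hn
  have hM := hf.supNorm_pos
  have hI := hf.integral_pos
  set M := supNorm f
  obtain ⟨S, hS, hSm, hSae⟩ := NullMeasurableSet.exists_measurable_subset_ae_eq
    (nullMeasurableSet_le aemeasurable_const hf.integrable.aemeasurable :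
      NullMeasurableSet {x | M * Real.exp (-t) ≤ f x} volume)
  rw [← measure_congr hSae] at ht
  obtain ⟨K, hKS, hK, hKvol⟩ := hSm.exists_lt_isCompact ht
  obtain ⟨y₀, hy₀⟩ := nonempty_of_measure_ne_zero (bot_le.trans_lt hKvol).ne'
  have hK' : IsCompact ((y₀ + ·) ⁻¹' K) := (Homeomorph.addLeft y₀).isCompact_preimage.2 hK
  rw [← measure_preimage_add volume y₀ K] at hKvol
  obtain ⟨v, hvK, hvdet⟩ := exists_mem_factorial_mul_volume_sq_le hK'.measurableSet
    hK'.isBounded (bot_le.trans_lt hKvol).ne'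
  refine ⟨v, n + t, by positivity, fun i ↦ ?_, ?_⟩
  · rcases eq_or_ne (v i) 0 with hv | hv
    · rw [hv, norm_zero, zero_mul]
      positivity
    · refine (hf.norm_mul_projL1_le hv (by positivity) (hS (hKS hy₀))
        (hS (hKS (hvK i)))).trans_eq ?_
      rw [div_mul_cancel_left₀ hM.ne', ← Real.exp_neg, neg_neg, Real.log_exp]
  · have hvol := (ENNReal.ofReal_lt_iff_lt_toReal (by positivity) hK'.measure_lt_top.ne).1 hKvol
    calc ((∫ x, f x) * (n + t) ^ n) ^ 2
        = (n.factorial * ((∫ x, f x) / (M * Real.exp n * n.factorial) * (n + t) ^ n) ^ 2) *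
          (M ^ 2 * Real.exp n ^ 2 * n.factorial) := by field_simp
      _ ≤ ((2 * Real.pi * Real.exp 1) ^ n * (Matrix.of fun i j ↦ v i j).det ^ 2) *
          (M ^ 2 * Real.exp n ^ 2 * n.factorial) := by
        gcongr ?_ * _
        refine le_trans ?_ hvdet
        gcongr
      _ = _ := by rw [← mul_one (n : ℝ), Real.exp_nat_mul]; ring

end IsLogConcaveDensity

end LevelSet

section Numerics

theorem two_mul_pow_le_succ_pow {n : ℕ} (hn : n ≠ 0) : 2 * n ^ n ≤ (n + 1) ^ n := by
  have hBernoulli : 1 + n * (n : ℝ)⁻¹ ≤ (1 + (n : ℝ)⁻¹) ^ n :=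
    one_add_mul_le_pow (by linarith [show 0 ≤ (n : ℝ)⁻¹ by positivity]) n
  have hn0 : (n : ℝ) ≠ 0 := Nat.cast_ne_zero.2 hn
  rify
  calc 2 * (n : ℝ) ^ n = (1 + n * (n : ℝ)⁻¹) * n ^ n := by
        rw [mul_inv_cancel₀ hn0, one_add_one_eq_two]
    _ ≤ (1 + (n : ℝ)⁻¹) ^ n * n ^ n := by gcongr
    _ = (n + 1 : ℝ) ^ n := by rw [← mul_pow, one_add_mul, inv_mul_cancel₀ hn0, add_comm]

theorem two_pow_mul_factorial_le_pow {n : ℕ} (hn : 6 ≤ n) : 2 ^ n * n.factorial ≤ n ^ n := by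
  induction n, hn using Nat.le_induction with
  | base => decide
  | succ n hn ih =>
    calc 2 ^ (n + 1) * (n + 1).factorial = 2 * (n + 1) * (2 ^ n * n.factorial) := by
          rw [Nat.factorial_succ]; ring
      _ ≤ 2 * (n + 1) * n ^ n := by gcongr
      _ = (n + 1) * (2 * n ^ n) := by ring
      _ ≤ (n + 1) * (n + 1) ^ n := by gcongr; exact two_mul_pow_le_succ_pow (by lia)
      _ = (n + 1) ^ (n + 1) := by ring

theorem two_pi_mul_exp_one_le : 2 * Real.pi * Real.exp 1 ≤ 17.08 := by
  have : Real.pi * Real.exp 1 ≤ 3.1416 * 2.7182818286 := by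
    gcongr
    exacts [Real.pi_lt_d4.le, Real.exp_one_lt_d9.le]
  norm_num at this ⊢
  linarith

theorem two_pi_mul_exp_one_pow_le : 2 * Real.pi * Real.exp 1 ^ 3 ≤ 128 := by
  calc 2 * Real.pi * Real.exp 1 ^ 3 = 2 * Real.pi * Real.exp 1 * Real.exp 1 ^ 2 := by ring
    _ ≤ 17.08 * 2.7182818286 ^ 2 := by
      gcongr
      exacts [two_pi_mul_exp_one_le, Real.exp_one_lt_d9.le]
    _ ≤ 128 := by norm_num

theorem mul_two_pi_exp_pow_mul_factorial_le (k : ℕ) :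
    ((1 + (k : ℝ)⁻¹) ^ ((k + 1) * k)) ^ 2 * (2 * Real.pi * Real.exp 1) ^ (k + 1) *
      (k + 1).factorial ≤ (64 * ((k + 1 : ℕ) : ℝ)) ^ (k + 1) := by
  rcases lt_or_ge k 5 with hsmall | hlarge
  · calc _ ≤ ((1 + (k : ℝ)⁻¹) ^ ((k + 1) * k)) ^ 2 * 17.08 ^ (k + 1) * (k + 1).factorial := by
          gcongr
          exact two_pi_mul_exp_one_le
      _ ≤ _ := by interval_cases k <;> norm_num [Nat.factorial]
  · calc _ ≤ (Real.exp 1 ^ (k + 1)) ^ 2 * (2 * Real.pi * Real.exp 1) ^ (k + 1) *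
          (k + 1).factorial := by
          rw [mul_comm (k + 1), pow_mul]
          gcongr
          exact Real.one_add_inv_pow_le_exp
      _ = (2 * Real.pi * Real.exp 1 ^ 3) ^ (k + 1) * (k + 1).factorial := by ring
      _ ≤ 128 ^ (k + 1) * (k + 1).factorial := by
          gcongr
          exact two_pi_mul_exp_one_pow_le
      _ = 64 ^ (k + 1) * (2 ^ (k + 1) * (k + 1).factorial) := by
          rw [← mul_assoc, ← mul_pow]; norm_num
      _ ≤ 64 ^ (k + 1) * ((k + 1 : ℕ) : ℝ) ^ (k + 1) := by
          gcongr
          exact_mod_cast two_pow_mul_factorial_le_pow (by lia)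
      _ = _ := (mul_pow _ _ _).symm

end Numerics

section Comparison

theorem norm_mul_projL1_le_of_forall_norm_eq_one {n : ℕ} {f₁ f₂ : Eucl n → ℝ}
    (h : ∀ θ : Eucl n, ‖θ‖ = 1 → projL1 f₁ (ℝ ∙ θ)ᗮ ≤ projL1 f₂ (ℝ ∙ θ)ᗮ) (v : Eucl n) :
    ‖v‖ * projL1 f₁ (ℝ ∙ v)ᗮ ≤ ‖v‖ * projL1 f₂ (ℝ ∙ v)ᗮ := by
  rcases eq_or_ne v 0 with rfl | hv
  · simp only [norm_zero, zero_mul, le_refl]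
  · have hunit := h (‖v‖⁻¹ • v) (by simpa using norm_smul_inv_norm (𝕜 := ℝ) hv)
    rw [Submodule.span_singleton_smul_eq (inv_ne_zero (norm_ne_zero_iff.2 hv)).isUnit] at hunit
    gcongr

namespace IsLogConcaveDensity

variable {k : ℕ}

theorem supNorm_mul_integral_pow_mul_abs_det_le {f : Eucl (k + 1) → ℝ} (hk : k ≠ 0)
    (hf : IsLogConcaveDensity f) (v : Fin (k + 1) → Eucl (k + 1)) :
    supNorm f * (∫ x, f x) ^ k * |(Matrix.of fun i j ↦ v i j).det| ≤
      (1 + (k : ℝ)⁻¹) ^ ((k + 1) * k) * ∏ i, ‖v i‖ * projL1 f (ℝ ∙ v i)ᗮ := by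
  set e := EuclideanSpace.basisFun (Fin (k + 1)) ℝ
  have hdet : e.toBasis.det v = (Matrix.of fun i j ↦ v i j).det := by
    rw [Basis.det_apply, ← Matrix.det_transpose]
    rfl
  rw [← hdet]
  rcases eq_or_ne (e.toBasis.det v) 0 with h0 | h0
  · rw [h0, abs_zero, mul_zero]
    exact mul_nonneg (by positivity) (Finset.prod_nonneg fun i _ ↦
      mul_nonneg (norm_nonneg _) (hf.projL1_nonneg _))
  · obtain ⟨hli, hspan⟩ := e.toBasis.is_basis_iff_det.2 h0.isUnit
    have hle := hf.supNorm_mul_integral_pow_le e (Basis.mk hli hspan.ge) hk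
    rw [← mul_div_assoc, Basis.coe_mk] at hle
    exact (le_div_iff₀ (abs_pos.2 h0)).1 hle

theorem supNorm_mul_integral_pow_le_of_projL1_le (hk : k ≠ 0) {f₁ f₂ : Eucl (k + 1) → ℝ}
    (hf₁ : IsLogConcaveDensity f₁) (hf₂ : IsLogConcaveDensity f₂)
    (h : ∀ θ : Eucl (k + 1), ‖θ‖ = 1 → projL1 f₁ (ℝ ∙ θ)ᗮ ≤ projL1 f₂ (ℝ ∙ θ)ᗮ) :
    supNorm f₁ * (∫ x, f₁ x) ^ k ≤ (8 * Real.exp 1 * Real.sqrt (k + 1 : ℕ)) ^ (k + 1) *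
      (supNorm f₂ * (∫ x, f₂ x) ^ k) := by
  obtain ⟨v, L, hL, hvL, hvdet⟩ := hf₂.exists_vectors_norm_mul_projL1_le k.add_one_ne_zero
  have hI₁ := hf₁.integral_pos
  have hI₂ := hf₂.integral_pos
  have hM₁ := hf₁.supNorm_pos
  have hM₂ := hf₂.supNorm_pos
  set D := (Matrix.of fun i j ↦ v i j).det
  set p : ℝ := (1 + (k : ℝ)⁻¹) ^ ((k + 1) * k)
  have hD : D ≠ 0 := fun h0 ↦ by
    have hpos : 0 < ((∫ x, f₂ x) * L ^ (k + 1)) ^ 2 := by positivity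
    rw [h0, mul_zero, zero_pow two_ne_zero, mul_zero] at hvdet
    exact hpos.not_ge hvdet
  have hprod : ∏ i, ‖v i‖ * projL1 f₁ (ℝ ∙ v i)ᗮ ≤ ((∫ x, f₂ x) * L) ^ (k + 1) := by
    refine (Finset.prod_le_prod (fun i _ ↦ mul_nonneg (norm_nonneg _) (hf₁.projL1_nonneg _))
      fun i _ ↦ (norm_mul_projL1_le_of_forall_norm_eq_one h (v i)).trans (hvL i)).trans_eq ?_
    rw [Finset.prod_const, Finset.card_univ, Fintype.card_fin]
  have hupper := (hf₁.supNorm_mul_integral_pow_mul_abs_det_le hk v).trans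
    (mul_le_mul_of_nonneg_left hprod (by positivity))
  have hsqrt : (64 * ((k + 1 : ℕ) : ℝ)) ^ (k + 1) =
      ((8 * Real.sqrt (k + 1 : ℕ)) ^ (k + 1)) ^ 2 := by
    rw [pow_right_comm, mul_pow 8, Real.sq_sqrt (Nat.cast_nonneg _)]
    norm_num
  refine le_of_mul_le_mul_right (le_of_sq_le_sq ?_ (by positivity)) (abs_pos.2 hD)
  calc (supNorm f₁ * (∫ x, f₁ x) ^ k * |D|) ^ 2
      ≤ (p * ((∫ x, f₂ x) * L) ^ (k + 1)) ^ 2 := by gcongr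
    _ = p ^ 2 * ((∫ x, f₂ x) ^ k) ^ 2 * ((∫ x, f₂ x) * L ^ (k + 1)) ^ 2 := by ring
    _ ≤ p ^ 2 * ((∫ x, f₂ x) ^ k) ^ 2 * ((2 * Real.pi * Real.exp 1 ^ 3) ^ (k + 1) *
        (k + 1).factorial * (supNorm f₂ * D) ^ 2) := by gcongr
    _ = (p ^ 2 * (2 * Real.pi * Real.exp 1) ^ (k + 1) * (k + 1).factorial) *
        (Real.exp 1 ^ (k + 1) * (supNorm f₂ * (∫ x, f₂ x) ^ k) * D) ^ 2 := by ring
    _ ≤ (64 * ((k + 1 : ℕ) : ℝ)) ^ (k + 1) *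
        (Real.exp 1 ^ (k + 1) * (supNorm f₂ * (∫ x, f₂ x) ^ k) * D) ^ 2 := by
      gcongr
      exact mul_two_pi_exp_pow_mul_factorial_le k
    _ = _ := by
      rw [hsqrt, mul_pow _ |D|, sq_abs]
      ring

theorem supNorm_rpow_mul_integral_rpow {f : Eucl (k + 1) → ℝ} (hf : IsLogConcaveDensity f) :
    supNorm f ^ ((1 : ℝ) / (k + 1 : ℕ)) *
        (∫ x, f x) ^ ((((k + 1 : ℕ) : ℝ) - 1) / (k + 1 : ℕ)) =
      (supNorm f * (∫ x, f x) ^ k) ^ ((k + 1 : ℕ) : ℝ)⁻¹ := by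
  rw [Real.mul_rpow hf.supNorm_pos.le (pow_nonneg hf.integral_pos.le k), one_div,
    ← Real.rpow_natCast_mul hf.integral_pos.le, Nat.cast_succ, add_sub_cancel_right,
    div_eq_mul_inv]

end IsLogConcaveDensity

theorem functional_shephard_codim_one_sup_int_general (n : ℕ) (hn : 2 ≤ n)
    (f₁ f₂ : Eucl n → ℝ) (hf₁ : IsLogConcaveDensity f₁) (hf₂ : IsLogConcaveDensity f₂)
    (hcond : ∀ θ : Eucl n, ‖θ‖ = 1 →
      projL1 f₁ (Submodule.span ℝ {θ})ᗮ ≤ projL1 f₂ (Submodule.span ℝ {θ})ᗮ) :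
    supNorm f₁ ^ ((1 : ℝ) / n) * (∫ x, f₁ x) ^ (((n : ℝ) - 1) / n) ≤
      8 * Real.exp 1 * Real.sqrt n *
        (supNorm f₂ ^ ((1 : ℝ) / n) * (∫ x, f₂ x) ^ (((n : ℝ) - 1) / n)) := by
  obtain ⟨k, rfl⟩ := Nat.exists_eq_add_of_le' (one_le_two.trans hn)
  have hpow := hf₁.supNorm_mul_integral_pow_le_of_projL1_le (by lia) hf₂ hcond
  have hM₁ := hf₁.supNorm_pos
  have hI₁ := hf₁.integral_pos
  have hM₂ := hf₂.supNorm_pos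
  have hI₂ := hf₂.integral_pos
  rw [hf₁.supNorm_rpow_mul_integral_rpow, hf₂.supNorm_rpow_mul_integral_rpow]
  calc (supNorm f₁ * (∫ x, f₁ x) ^ k) ^ ((k + 1 : ℕ) : ℝ)⁻¹
      ≤ ((8 * Real.exp 1 * Real.sqrt (k + 1 : ℕ)) ^ (k + 1) *
          (supNorm f₂ * (∫ x, f₂ x) ^ k)) ^ ((k + 1 : ℕ) : ℝ)⁻¹ := by gcongr
    _ = _ := by
      rw [Real.mul_rpow (by positivity) (by positivity),
        Real.pow_rpow_inv_natCast (by positivity) k.succ_ne_zero]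

end Comparison

/-- **Functional Shephard problem of codimension one** (Corollary 3.2, second bound). -/
theorem functional_shephard_codim_one_sup_int (n : ℕ) (hn : 2 ≤ n)
    (f₁ f₂ : Eucl n → ℝ) (hf₁ : MemQ0 f₁) (hf₂ : MemQ0 f₂)
    (hcond : ∀ θ : Eucl n, ‖θ‖ = 1 →
      projL1 f₁ (Submodule.span ℝ {θ})ᗮ ≤ projL1 f₂ (Submodule.span ℝ {θ})ᗮ) :
    supNorm f₁ ^ ((1 : ℝ) / n) * (∫ x, f₁ x) ^ (((n : ℝ) - 1) / n) ≤
      8 * Real.exp 1 * Real.sqrt n *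
        (supNorm f₂ ^ ((1 : ℝ) / n) * (∫ x, f₂ x) ^ (((n : ℝ) - 1) / n)) :=
  functional_shephard_codim_one_sup_int_general n hn f₁ f₂ hf₁.isLogConcaveDensity
    hf₂.isLogConcaveDensity hcond
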